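/- arXiv:2107.04081 — 2 statements merged into one kernel-verified Lean document; each statement's English description precedes it below -/
import Mathlib

section
/- Let C = ⟨A, B, Q, q0, D, δ, dist, ℕ, col⟩ be a finite stochastic concurrent arena that is locally determined, whose coloring col : Q × Q → ℕ takes values in the interval ⟦m, n⟧ for some m ≤ n. Let W_par := {ρ ∈ ℕ^ω | ρ takes only finitely many values and the greatest value occurring infinitely often in ρ is even} (the parity objective). Then the game ⟨C, W_par⟩ is positionally determined: there exist positional color strategies s_A (a map Q → A) and s_B (a map Q → B) such that inf over all state strategies t_B of P^{s_A, t_B}(U_{W_par}) = sup over all state strategies t_A of P^{t_A, s_B}(U_{W_par}); consequently val_A = val_B equals this common value, and s_A, s_B are optimal. -/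
open MeasureTheory
open scoped Classical ENNReal

universe u

/-- The cylinder set generated by a finite word. -/
def Cyl {K : Type u} (w : List K) : Set (ℕ → K) :=
  {ρ | ∀ i : ℕ, ∀ h : i < w.length, ρ i = w.get ⟨i, h⟩}

/-- The σ-algebra on `ℕ → K` generated by cylinder sets. -/
def BorelSeq (K : Type u) : MeasurableSpace (ℕ → K) :=
  MeasurableSpace.generateFrom {s | ∃ w : List K, s = Cyl w}

/-- A game form (given by its outcome function `ρ : S_A → S_B → O`) is determined. -/
def GFDetermined {SA SB O : Type u} (ρ : SA → SB → O) : Prop :=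
  ∀ V : Set O, (∃ a, ∀ b, ρ a b ∈ V) ∨ (∃ b, ∀ a, ρ a b ∉ V)

/-- The color sequence of an infinite play. -/
def colorSeq {Q K : Type u} (col : Q → Q → K) (π : ℕ → Q) : ℕ → K :=
  fun n => col (π n) (π (n + 1))

/-- The color history along the state history `h ++ [q]`. -/
def colHist {Q K : Type u} (col : Q → Q → K) : List Q → Q → List K
  | [], _ => []
  | [p], q => [col p q]
  | p :: p' :: r, q => col p p' :: colHist col (p' :: r) q

/-- The (deterministic) state strategy induced by a color strategy of Player A:
after state history `h` with current state `q`, play `sA` applied to the color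
history and the current state. -/
noncomputable def toStratA {A Q K : Type u} (col : Q → Q → K)
    (sA : List K → Q → A) : List Q → Q → PMF A :=
  fun h q => PMF.pure (sA (colHist col h q) q)

/-- The (deterministic) state strategy induced by a color strategy of Player B. -/
noncomputable def toStratB {B Q K : Type u} (col : Q → Q → K)
    (sB : List K → Q → B) : List Q → Q → PMF B :=
  fun h q => PMF.pure (sB (colHist col h q) q)

/-- The strict history `π_0 ⋯ π_{i-1}` before step `i` of a finite play
`π : Fin (k+1) → Q`. -/
def histOf {Q : Type u} {k : ℕ} (π : Fin (k + 1) → Q) (i : Fin k) : List Q :=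
  List.ofFn (fun j : Fin (i : ℕ) => π (Fin.castLE (Nat.le_succ_of_le i.isLt.le) j))

/-- The set of plays whose color sequence lies in `W`. -/
def UW {Q K : Type u} (col : Q → Q → K) (W : Set (ℕ → K)) : Set (ℕ → Q) :=
  {π | colorSeq col π ∈ W}

/-- The value of Player A's color strategy `sA`: the infimum over Player B's state
strategies of the probability of `U`. -/
noncomputable def valSA {A B Q K : Type u} (col : Q → Q → K)
    (P : (List Q → Q → PMF A) → (List Q → Q → PMF B) →
      @Measure (ℕ → Q) (BorelSeq Q))
    (U : Set (ℕ → Q)) (sA : List K → Q → A) : ℝ≥0∞ :=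
  ⨅ tB : List Q → Q → PMF B, P (toStratA col sA) tB U

/-- The value of Player B's color strategy `sB`: the supremum over Player A's state
strategies of the probability of `U`. -/
noncomputable def valSB {A B Q K : Type u} (col : Q → Q → K)
    (P : (List Q → Q → PMF A) → (List Q → Q → PMF B) →
      @Measure (ℕ → Q) (BorelSeq Q))
    (U : Set (ℕ → Q)) (sB : List K → Q → B) : ℝ≥0∞ :=
  ⨆ tA : List Q → Q → PMF A, P tA (toStratB col sB) U

/-- The value of the game for Player A. -/
noncomputable def valA {A B Q K : Type u} (col : Q → Q → K)
    (P : (List Q → Q → PMF A) → (List Q → Q → PMF B) →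
      @Measure (ℕ → Q) (BorelSeq Q))
    (U : Set (ℕ → Q)) : ℝ≥0∞ :=
  ⨆ sA : List K → Q → A, valSA col P U sA

/-- The value of the game for Player B. -/
noncomputable def valB {A B Q K : Type u} (col : Q → Q → K)
    (P : (List Q → Q → PMF A) → (List Q → Q → PMF B) →
      @Measure (ℕ → Q) (BorelSeq Q))
    (U : Set (ℕ → Q)) : ℝ≥0∞ :=
  ⨅ sB : List K → Q → B, valSB col P U sB

/-- The value `c` occurs infinitely often in `ρ`. -/
def InfOccur (ρ : ℕ → ℕ) (c : ℕ) : Prop := ∀ N : ℕ, ∃ j : ℕ, N ≤ j ∧ ρ j = c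

/-- The parity objective: sequences taking finitely many values whose greatest
value occurring infinitely often is even. -/
def Wpar : Set (ℕ → ℕ) :=
  {ρ | (Set.range ρ).Finite ∧
    ∃ c : ℕ, InfOccur ρ c ∧ (∀ c', InfOccur ρ c' → c' ≤ c) ∧ Even c}

/-! ### Path functionals -/

/-- Survival weight after `N` steps. -/
noncomputable def pN (ε : ℕ → ℝ) (ρ : ℕ → ℕ) (N : ℕ) : ℝ :=
  ∏ l ∈ Finset.range N, (1 - ε (ρ l))

/-- Accumulated discounted payoff after `N` steps. -/
noncomputable def sN (e ε : ℕ → ℝ) (ρ : ℕ → ℕ) (N : ℕ) : ℝ :=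
  ∑ i ∈ Finset.range N, pN ε ρ i * (ε (ρ i) * e (ρ i))

noncomputable def pInf (ε : ℕ → ℝ) (ρ : ℕ → ℕ) : ℝ := ⨅ N, pN ε ρ N

noncomputable def sInfty (e ε : ℕ → ℝ) (ρ : ℕ → ℕ) : ℝ := ⨆ N, sN e ε ρ N

/-- Discount vectors. -/
def IsDisc (ε : ℕ → ℝ) : Prop := ∀ c, 0 ≤ ε c ∧ ε c < 1

def IsWt (e : ℕ → ℝ) : Prop := ∀ c, 0 ≤ e c ∧ e c ≤ 1

theorem pN_nonneg {ε : ℕ → ℝ} (hε : IsDisc ε) (ρ : ℕ → ℕ) (N : ℕ) : 0 ≤ pN ε ρ N :=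
  Finset.prod_nonneg fun l _ => by linarith [(hε (ρ l)).2]

theorem pN_succ (ε : ℕ → ℝ) (ρ : ℕ → ℕ) (N : ℕ) :
    pN ε ρ (N + 1) = pN ε ρ N * (1 - ε (ρ N)) := by
  simp [pN, Finset.prod_range_succ]

theorem sN_succ (e ε : ℕ → ℝ) (ρ : ℕ → ℕ) (N : ℕ) :
    sN e ε ρ (N + 1) = sN e ε ρ N + pN ε ρ N * (ε (ρ N) * e (ρ N)) := by
  simp [sN, Finset.sum_range_succ]

theorem pN_anti {ε : ℕ → ℝ} (hε : IsDisc ε) (ρ : ℕ → ℕ) : Antitone (pN ε ρ) := by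
  refine antitone_nat_of_succ_le fun N => ?_
  rw [pN_succ]
  nlinarith [pN_nonneg hε ρ N, (hε (ρ N)).1]

theorem sN_mono {e ε : ℕ → ℝ} (he : IsWt e) (hε : IsDisc ε) (ρ : ℕ → ℕ) :
    Monotone (sN e ε ρ) := by
  refine monotone_nat_of_le_succ fun N => ?_
  rw [sN_succ]
  have := mul_nonneg (pN_nonneg hε ρ N) (mul_nonneg (hε (ρ N)).1 (he (ρ N)).1)
  linarith

theorem sN_add (e ε : ℕ → ℝ) (ρ : ℕ → ℕ) (N : ℕ) :
    sN e ε ρ N + sN (fun c => 1 - e c) ε ρ N + pN ε ρ N = 1 := by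
  induction N with
  | zero => simp [sN, pN]
  | succ N ih => rw [sN_succ, sN_succ, pN_succ]; linear_combination ih

theorem IsWt.compl {e : ℕ → ℝ} (he : IsWt e) : IsWt (fun c => 1 - e c) := fun c =>
  ⟨by linarith [(he c).2], by linarith [(he c).1]⟩

theorem sN_nonneg {e ε : ℕ → ℝ} (he : IsWt e) (hε : IsDisc ε) (ρ : ℕ → ℕ) (N : ℕ) :
    0 ≤ sN e ε ρ N := by
  have := sN_mono he hε ρ (Nat.zero_le N)
  simpa [sN] using this

theorem sN_le_one {e ε : ℕ → ℝ} (he : IsWt e) (hε : IsDisc ε) (ρ : ℕ → ℕ) (N : ℕ) :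
    sN e ε ρ N ≤ 1 := by
  linarith [sN_add e ε ρ N, sN_nonneg he.compl hε ρ N, pN_nonneg hε ρ N]

theorem sN_bdd {e ε : ℕ → ℝ} (he : IsWt e) (hε : IsDisc ε) (ρ : ℕ → ℕ) :
    BddAbove (Set.range (sN e ε ρ)) := ⟨1, by rintro _ ⟨N, rfl⟩; exact sN_le_one he hε ρ N⟩

theorem pN_bdd {ε : ℕ → ℝ} (hε : IsDisc ε) (ρ : ℕ → ℕ) :
    BddBelow (Set.range (pN ε ρ)) := ⟨0, by rintro _ ⟨N, rfl⟩; exact pN_nonneg hε ρ N⟩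

theorem sN_tendsto {e ε : ℕ → ℝ} (he : IsWt e) (hε : IsDisc ε) (ρ : ℕ → ℕ) :
    Filter.Tendsto (sN e ε ρ) Filter.atTop (nhds (sInfty e ε ρ)) :=
  tendsto_atTop_ciSup (sN_mono he hε ρ) (sN_bdd he hε ρ)

theorem pN_tendsto {ε : ℕ → ℝ} (hε : IsDisc ε) (ρ : ℕ → ℕ) :
    Filter.Tendsto (pN ε ρ) Filter.atTop (nhds (pInf ε ρ)) :=
  tendsto_atTop_ciInf (pN_anti hε ρ) (pN_bdd hε ρ)

theorem sInfty_add {e ε : ℕ → ℝ} (he : IsWt e) (hε : IsDisc ε) (ρ : ℕ → ℕ) :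
    sInfty e ε ρ + sInfty (fun c => 1 - e c) ε ρ + pInf ε ρ = 1 := by
  have h := ((sN_tendsto he hε ρ).add (sN_tendsto he.compl hε ρ)).add (pN_tendsto hε ρ)
  simp only [sN_add] at h
  exact tendsto_nhds_unique h tendsto_const_nhds

theorem pInf_nonneg {ε : ℕ → ℝ} (hε : IsDisc ε) (ρ : ℕ → ℕ) : 0 ≤ pInf ε ρ :=
  le_ciInf (pN_nonneg hε ρ)

theorem sN_le_sInfty {e ε : ℕ → ℝ} (he : IsWt e) (hε : IsDisc ε) (ρ : ℕ → ℕ) (N : ℕ) :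
    sN e ε ρ N ≤ sInfty e ε ρ := le_ciSup (sN_bdd he hε ρ) N

theorem sInfty_nonneg {e ε : ℕ → ℝ} (he : IsWt e) (hε : IsDisc ε) (ρ : ℕ → ℕ) :
    0 ≤ sInfty e ε ρ := (sN_nonneg he hε ρ 0).trans (sN_le_sInfty he hε ρ 0)

/-- If an active color occurs infinitely often, the survival weight vanishes. -/
theorem pInf_eq_zero {ε : ℕ → ℝ} (hε : IsDisc ε) (ρ : ℕ → ℕ) (c : ℕ) (hc : InfOccur ρ c)
    (hpos : 0 < ε c) : pInf ε ρ = 0 := by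
  have h1 : ∀ k : ℕ, ∃ N, pN ε ρ N ≤ (1 - ε c) ^ k := by
    intro k
    induction k with
    | zero => exact ⟨0, by simp [pN]⟩
    | succ k ih =>
      obtain ⟨N, hN⟩ := ih
      obtain ⟨j, hj, hjc⟩ := hc N
      refine ⟨j + 1, ?_⟩
      rw [pN_succ, hjc, pow_succ]
      exact mul_le_mul_of_nonneg_right ((pN_anti hε ρ hj).trans hN) (by linarith [(hε c).2])
  refine le_antisymm ?_ (pInf_nonneg hε ρ)
  have h2 : Filter.Tendsto (fun k : ℕ => (1 - ε c) ^ k) Filter.atTop (nhds 0) :=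
    tendsto_pow_atTop_nhds_zero_of_lt_one (by linarith [(hε c).2]) (by linarith)
  refine ge_of_tendsto' h2 fun k => ?_
  obtain ⟨N, hN⟩ := h1 k
  exact (ciInf_le (pN_bdd hε ρ) N).trans hN

theorem exists_max_color (ρ : ℕ → ℕ) (n : ℕ) (hρ : ∀ i, ρ i ≤ n) :
    ∃ c N0, InfOccur ρ c ∧ ∀ i, N0 ≤ i → ρ i ≤ c := by
  have hex : ∃ c, ∃ N0, ∀ i, N0 ≤ i → ρ i ≤ c := ⟨n, 0, fun i _ => hρ i⟩
  obtain ⟨N0, hN0⟩ := Nat.find_spec hex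
  refine ⟨Nat.find hex, N0, ?_, hN0⟩
  intro N
  by_contra hcon
  push Not at hcon
  by_cases h0 : Nat.find hex = 0
  · have h1 := hN0 (max N N0) (le_max_right _ _)
    have h2 := hcon (max N N0) (le_max_left _ _)
    omega
  · refine Nat.find_min hex (m := Nat.find hex - 1) (by omega) ⟨max N N0, fun i hi => ?_⟩
    have h1 := hN0 i ((le_max_right _ _).trans hi)
    have h2 := hcon i ((le_max_left _ _).trans hi)
    omega

theorem pN_cont {εs : ℕ → ℕ → ℝ} {ε : ℕ → ℝ}
    (h : ∀ c, Filter.Tendsto (fun k => εs k c) Filter.atTop (nhds (ε c))) (ρ : ℕ → ℕ) (N : ℕ) :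
    Filter.Tendsto (fun k => pN (εs k) ρ N) Filter.atTop (nhds (pN ε ρ N)) :=
  tendsto_finsetProd _ fun l _ => (h (ρ l)).const_sub 1

theorem sN_cont {εs : ℕ → ℕ → ℝ} {ε : ℕ → ℝ} (e : ℕ → ℝ)
    (h : ∀ c, Filter.Tendsto (fun k => εs k c) Filter.atTop (nhds (ε c))) (ρ : ℕ → ℕ) (N : ℕ) :
    Filter.Tendsto (fun k => sN e (εs k) ρ N) Filter.atTop (nhds (sN e ε ρ N)) :=
  tendsto_finsetSum _ fun i _ => (pN_cont h ρ i).mul ((h (ρ i)).mul_const _)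

/-- If after `N0` no color is both active and of weight non-zero, the payoff stabilizes. -/
theorem sInfty_stable {e ε : ℕ → ℝ} (he : IsWt e) (hε : IsDisc ε) (ρ : ℕ → ℕ) (N0 : ℕ)
    (h : ∀ i, N0 ≤ i → ε (ρ i) * e (ρ i) = 0) : sInfty e ε ρ = sN e ε ρ N0 := by
  refine le_antisymm (ciSup_le fun N => ?_) (sN_le_sInfty he hε ρ N0)
  rcases le_total N N0 with hN | hN
  · exact sN_mono he hε ρ hN
  · induction N, hN using Nat.le_induction with
    | base => exact le_rfl
    | succ N hN ih => rw [sN_succ, h N hN]; simpa using ih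

theorem lsc_aux {e : ℕ → ℝ} (he : IsWt e) (he01 : ∀ c, e c = 0 ∨ e c = 1)
    {εs : ℕ → ℕ → ℝ} {ε : ℕ → ℝ} (hε : IsDisc ε) (hεs : ∀ k, IsDisc (εs k))
    (h : ∀ c, Filter.Tendsto (fun k => εs k c) Filter.atTop (nhds (ε c))) (j : ℕ)
    (hlow : ∀ c, c < j → ε c = 0 ∧ ∀ k, εs k c = 0) (hhigh : ∀ c, j < c → 0 < ε c)
    (ρ : ℕ → ℕ) (cs N0 : ℕ) (hcs : InfOccur ρ cs) (hN0 : ∀ i, N0 ≤ i → ρ i ≤ cs)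
    (η : ℝ) (hη : 0 < η) :
    ∀ᶠ k in Filter.atTop, sInfty e ε ρ + pInf ε ρ * e cs - η <
      sInfty e (εs k) ρ + pInf (εs k) ρ * e cs := by
  by_cases hcase : e cs = 1 ∧ cs ≤ j
  · obtain ⟨h1, h2⟩ := hcase
    have key : ∀ ε' : ℕ → ℝ, IsDisc ε' → (∀ c, c < j → ε' c = 0) →
        sInfty e ε' ρ + pInf ε' ρ * e cs = 1 - sN (fun c => 1 - e c) ε' ρ N0 := by
      intro ε' hε' hl
      have := sInfty_add he hε' ρ
      rw [sInfty_stable he.compl hε' ρ N0] at this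
      · rw [h1]; linarith
      · intro i hi
        have := hN0 i hi
        rcases lt_or_eq_of_le this with hlt | heq
        · rw [hl _ (by omega)]; simp
        · rw [heq, h1]; simp
    have ht : Filter.Tendsto (fun k => sInfty e (εs k) ρ + pInf (εs k) ρ * e cs) Filter.atTop
        (nhds (sInfty e ε ρ + pInf ε ρ * e cs)) := by
      rw [key ε hε fun c hc => (hlow c hc).1]
      simp_rw [fun k => key (εs k) (hεs k) fun c hc => (hlow c hc).2 k]
      exact (sN_cont _ h ρ N0).const_sub 1
    exact ht.eventually_const_lt (by linarith)
  · have hz : pInf ε ρ * e cs = 0 := by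
      rcases he01 cs with h0 | h1
      · simp [h0]
      · have : j < cs := by
          by_contra hc
          exact hcase ⟨h1, by omega⟩
        rw [pInf_eq_zero hε ρ cs hcs (hhigh cs this), zero_mul]
    rw [hz, add_zero]
    obtain ⟨N, hN⟩ := ((sN_tendsto he hε ρ).eventually_const_lt
      (show sInfty e ε ρ - η < sInfty e ε ρ by linarith)).exists
    filter_upwards [(sN_cont e h ρ N).eventually_const_lt hN] with k hk
    have h1 := sN_le_sInfty he (hεs k) ρ N
    have h2 := mul_nonneg (pInf_nonneg (hεs k) ρ) (he cs).1
    linarith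

/-- Weight of even colors. -/
noncomputable def ev (c : ℕ) : ℝ := if Even c then 1 else 0

theorem ev_wt : IsWt ev := fun c => by unfold ev; split_ifs <;> norm_num

theorem ev01 (c : ℕ) : ev c = 0 ∨ ev c = 1 := by unfold ev; split_ifs <;> simp

/-- The interpolating payoff between discounted and parity payoffs. -/
noncomputable def Fpay (ε : ℕ → ℝ) (ρ : ℕ → ℕ) : ℝ :=
  sInfty ev ε ρ + pInf ε ρ * Wpar.indicator (fun _ => 1) ρ

theorem wpar_ind (ρ : ℕ → ℕ) (n cs N0 : ℕ) (hρ : ∀ i, ρ i ≤ n) (hcs : InfOccur ρ cs)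
    (hN0 : ∀ i, N0 ≤ i → ρ i ≤ cs) : Wpar.indicator (fun _ => (1 : ℝ)) ρ = ev cs := by
  have hmax : ∀ c', InfOccur ρ c' → c' ≤ cs := by
    intro c' hc'
    obtain ⟨j, hj, rfl⟩ := hc' N0
    exact hN0 j hj
  have hiff : ρ ∈ Wpar ↔ Even cs := by
    constructor
    · rintro ⟨-, c, hc, hcm, hce⟩
      rwa [le_antisymm (hcm cs hcs) (hmax c hc)]
    · intro h
      refine ⟨(Set.finite_Iic n).subset ?_, cs, hcs, hmax, h⟩
      rintro _ ⟨i, rfl⟩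
      exact hρ i
  by_cases h : Even cs
  · rw [Set.indicator_of_mem (hiff.2 h)]; simp [ev, h]
  · rw [Set.indicator_of_notMem (fun h' => h (hiff.1 h'))]; simp [ev, h]

theorem Fpay_tendsto {εs : ℕ → ℕ → ℝ} {ε : ℕ → ℝ} (hε : IsDisc ε) (hεs : ∀ k, IsDisc (εs k))
    (h : ∀ c, Filter.Tendsto (fun k => εs k c) Filter.atTop (nhds (ε c))) (j : ℕ)
    (hlow : ∀ c, c < j → ε c = 0 ∧ ∀ k, εs k c = 0) (hhigh : ∀ c, j < c → 0 < ε c)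
    (ρ : ℕ → ℕ) (n : ℕ) (hρ : ∀ i, ρ i ≤ n) :
    Filter.Tendsto (fun k => Fpay (εs k) ρ) Filter.atTop (nhds (Fpay ε ρ)) := by
  obtain ⟨cs, N0, hcs, hN0⟩ := exists_max_color ρ n hρ
  unfold Fpay
  rw [wpar_ind ρ n cs N0 hρ hcs hN0]
  rw [Metric.tendsto_nhds]
  intro η hη
  filter_upwards [lsc_aux ev_wt ev01 hε hεs h j hlow hhigh ρ cs N0 hcs hN0 η hη,
    lsc_aux ev_wt.compl (fun c => by rcases ev01 c with h | h <;> simp [h])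
      hε hεs h j hlow hhigh ρ cs N0 hcs hN0 η hη] with k h1 h2
  have h3 := sInfty_add ev_wt hε ρ
  have h4 := sInfty_add ev_wt (hεs k) ρ
  rw [Real.dist_eq, abs_lt]
  constructor <;> nlinarith

theorem Fpay_nonneg {ε : ℕ → ℝ} (hε : IsDisc ε) (ρ : ℕ → ℕ) : 0 ≤ Fpay ε ρ := by
  refine add_nonneg (sInfty_nonneg ev_wt hε ρ) (mul_nonneg (pInf_nonneg hε ρ) ?_)
  exact Set.indicator_nonneg (fun _ _ => zero_le_one) _

theorem Fpay_le_one {ε : ℕ → ℝ} (hε : IsDisc ε) (ρ : ℕ → ℕ) : Fpay ε ρ ≤ 1 := by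
  have h1 := sInfty_add ev_wt hε ρ
  have h2 := sInfty_nonneg ev_wt.compl hε ρ
  have h3 : Wpar.indicator (fun _ => (1 : ℝ)) ρ ≤ 1 :=
    Set.indicator_le_self' (fun _ _ => zero_le_one) _
  have h4 := mul_le_mul_of_nonneg_left h3 (pInf_nonneg hε ρ)
  unfold Fpay
  linarith

theorem pN_meas (ε : ℕ → ℝ) (N : ℕ) : Measurable fun ρ : ℕ → ℕ => pN ε ρ N := by
  unfold pN
  exact Finset.measurable_prod _ fun l _ =>
    (measurable_from_top (f := fun c : ℕ => 1 - ε c)).comp (measurable_pi_apply l)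

theorem sN_meas (e ε : ℕ → ℝ) (N : ℕ) : Measurable fun ρ : ℕ → ℕ => sN e ε ρ N := by
  unfold sN
  exact Finset.measurable_sum _ fun l _ => (pN_meas ε l).mul
    ((measurable_from_top (f := fun c : ℕ => ε c * e c)).comp (measurable_pi_apply l))

theorem infOccur_meas (c : ℕ) : MeasurableSet {ρ : ℕ → ℕ | InfOccur ρ c} := by
  unfold InfOccur
  simp only [Set.ofPred_forall, Set.ofPred_exists, Set.ofPred_and]
  refine MeasurableSet.iInter fun N => MeasurableSet.iUnion fun j =>
    (MeasurableSet.const _).inter ?_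
  exact measurableSet_eq_fun (measurable_pi_apply j) measurable_const

theorem Wpar_meas : MeasurableSet Wpar := by
  have : Wpar = {ρ : ℕ → ℕ | (∃ M, ∀ i, ρ i ≤ M) ∧
      ∃ c, InfOccur ρ c ∧ (∀ c', InfOccur ρ c' → c' ≤ c) ∧ Even c} := by
    ext ρ
    refine and_congr_left fun _ => ?_
    constructor
    · intro h
      obtain ⟨M, hM⟩ := h.bddAbove
      exact ⟨M, fun i => hM ⟨i, rfl⟩⟩
    · rintro ⟨M, hM⟩
      exact (Set.finite_Iic M).subset (by rintro _ ⟨i, rfl⟩; exact hM i)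
  rw [this]
  refine MeasurableSet.inter ?_ ?_
  · have : {ρ : ℕ → ℕ | ∃ M, ∀ i, ρ i ≤ M} = ⋃ M, ⋂ i, {ρ : ℕ → ℕ | ρ i ≤ M} := by
      ext; simp
    change MeasurableSet {ρ : ℕ → ℕ | ∃ M, ∀ i, ρ i ≤ M}
    rw [this]
    exact MeasurableSet.iUnion fun M => MeasurableSet.iInter fun i =>
      measurableSet_le (measurable_pi_apply i) measurable_const
  · change MeasurableSet {ρ : ℕ → ℕ | ∃ c, InfOccur ρ c ∧ (∀ c', InfOccur ρ c' → c' ≤ c) ∧ Even c}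
    simp only [Set.ofPred_exists, Set.ofPred_and, Set.ofPred_forall]
    refine MeasurableSet.iUnion fun c => (infOccur_meas c).inter (MeasurableSet.inter ?_
      (MeasurableSet.const _))
    refine MeasurableSet.iInter fun c' => ?_
    by_cases h : c' ≤ c
    · simp [h]
    · simp only [h, imp_false]
      exact (infOccur_meas c').compl

theorem Fpay_meas {ε : ℕ → ℝ} (hε : IsDisc ε) : Measurable (Fpay ε) := by
  unfold Fpay
  refine Measurable.add ?_ (Measurable.mul ?_ (measurable_const.indicator Wpar_meas))
  · exact measurable_of_tendsto_metrizable (fun N => sN_meas ev ε N)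
      (tendsto_pi_nhds.2 fun ρ => sN_tendsto ev_wt hε ρ)
  · exact measurable_of_tendsto_metrizable (fun N => pN_meas ε N)
      (tendsto_pi_nhds.2 fun ρ => pN_tendsto hε ρ)

/-! ### Probabilistic part -/

/-- Fundamental one-step inequality: one-step expectations give a non-negative integral. -/
theorem step_integral {Ω Q : Type} [MeasurableSpace Ω] [Fintype Q] (μ : Measure Ω)
    [IsProbabilityMeasure μ] (X : ℕ → Ω → Q) (hX : ∀ k q, MeasurableSet {ω | X k ω = q})
    (col : Q → Q → ℕ) (ε : ℕ → ℝ) (hε : IsDisc ε) (N : ℕ) (r : Q → Q → ℝ)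
    (hr : ∀ π : Fin (N + 1) → Q, 0 ≤ ∑ q' : Q,
      μ.real {ω | (∀ i : Fin (N + 1), X i ω = π i) ∧ X (N + 1) ω = q'} * r (π (Fin.last N)) q') :
    0 ≤ ∫ ω, pN ε (fun i => col (X i ω) (X (i + 1) ω)) N * r (X N ω) (X (N + 1) ω) ∂μ := by
  set E : (Fin (N + 1) → Q) → Q → Set Ω := fun π q' =>
    {ω | (∀ i : Fin (N + 1), X i ω = π i) ∧ X (N + 1) ω = q'} with hE
  have hEm : ∀ π q', MeasurableSet (E π q') := by
    intro π q'
    have : E π q' = (⋂ i : Fin (N + 1), {ω | X i ω = π i}) ∩ {ω | X (N + 1) ω = q'} := by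
      ext ω; simp [hE]
    rw [this]
    exact (MeasurableSet.iInter fun i => hX _ _).inter (hX _ _)
  let ext : (Fin (N + 1) → Q) → ℕ → Q := fun π i => π ⟨min i N, by omega⟩
  let pw : (Fin (N + 1) → Q) → ℝ := fun π => pN ε (fun i => col (ext π i) (ext π (i + 1))) N
  have hfun : (fun ω => pN ε (fun i => col (X i ω) (X (i + 1) ω)) N * r (X N ω) (X (N + 1) ω)) =
      fun ω => ∑ π : Fin (N + 1) → Q, ∑ q' : Q,
        (E π q').indicator (fun _ => pw π * r (π (Fin.last N)) q') ω := by
    funext ω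
    rw [Finset.sum_eq_single (fun i : Fin (N + 1) => X i ω), Finset.sum_eq_single (X (N + 1) ω)]
    · rw [Set.indicator_of_mem (show ω ∈ E _ _ from ⟨fun i => rfl, rfl⟩)]
      congr 1
      unfold pw pN
      refine Finset.prod_congr rfl fun i hi => ?_
      have hi' := Finset.mem_range.1 hi
      simp only [ext, Nat.min_eq_left hi'.le, Nat.min_eq_left (Nat.succ_le_of_lt hi')]
    · intro q' _ hq'
      exact Set.indicator_of_notMem (fun h => hq' h.2.symm) _
    · intro h; exact absurd (Finset.mem_univ _) h
    · intro π _ hπ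
      refine Finset.sum_eq_zero fun q' _ => Set.indicator_of_notMem (fun h => hπ ?_) _
      funext i; exact (h.1 i).symm
    · intro h; exact absurd (Finset.mem_univ _) h
  rw [hfun, integral_finsetSum]
  · refine Finset.sum_nonneg fun π _ => ?_
    rw [integral_finsetSum]
    · have : ∀ q', ∫ ω, (E π q').indicator (fun _ => pw π * r (π (Fin.last N)) q') ω ∂μ =
          pw π * (μ.real (E π q') * r (π (Fin.last N)) q') := by
        intro q'
        rw [integral_indicator_const _ (hEm π q')]
        simp only [smul_eq_mul]; ring
      simp_rw [this]
      rw [← Finset.mul_sum]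
      exact mul_nonneg (pN_nonneg hε _ N) (hr π)
    · intro q' _
      exact (integrable_const _).indicator (hEm π q')
  · intro π _
    exact integrable_finsetSum _ fun q' _ => (integrable_const _).indicator (hEm π q')

theorem colseq_meas {Ω Q : Type} [MeasurableSpace Ω] [Fintype Q]
    (X : ℕ → Ω → Q) (hX : ∀ k q, MeasurableSet {ω | X k ω = q}) (col : Q → Q → ℕ) :
    Measurable fun ω => fun i => col (X i ω) (X (i + 1) ω) := by
  letI : MeasurableSpace Q := ⊤
  have h : ∀ k, Measurable (X k) := fun k => measurable_to_countable' fun q => hX k q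
  refine measurable_pi_lambda _ fun i => ?_
  exact (measurable_from_top (f := fun p : Q × Q => col p.1 p.2)).comp
    (((h i).prodMk (h (i + 1))).mono le_rfl (by
      intro s _; exact MeasurableSet.of_discrete))

theorem state_meas {Ω Q : Type} [MeasurableSpace Ω] [Fintype Q]
    (X : ℕ → Ω → Q) (hX : ∀ k q, MeasurableSet {ω | X k ω = q}) (f : Q → ℝ) (k : ℕ) :
    Measurable fun ω => f (X k ω) := by
  letI : MeasurableSpace Q := ⊤
  have h : ∀ k, Measurable (X k) := fun k => measurable_to_countable' fun q => hX k q
  exact measurable_from_top.comp (h k)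

theorem pN_le_pow {ε : ℕ → ℝ} (hε : IsDisc ε) (ρ : ℕ → ℕ) (κ : ℝ) (h : ∀ i, 1 - ε (ρ i) ≤ κ)
    (N : ℕ) : pN ε ρ N ≤ κ ^ N := by
  induction N with
  | zero => simp [pN]
  | succ N ih =>
    rw [pN_succ, pow_succ]
    exact mul_le_mul ih (h N) (by linarith [(hε (ρ N)).2]) ((pN_nonneg hε ρ N).trans ih)

/-- Discounted lower bound along a process; `sg` is the sign (for the two players). -/
theorem disc_bound {Ω Q : Type} [MeasurableSpace Ω] [Fintype Q] (μ : Measure Ω)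
    [IsProbabilityMeasure μ] (X : ℕ → Ω → Q) (hX : ∀ k q, MeasurableSet {ω | X k ω = q})
    (q0 : Q) (h0 : ∀ᵐ ω ∂μ, X 0 ω = q0)
    (col : Q → Q → ℕ) (ε : ℕ → ℝ) (hε : IsDisc ε) (κ : ℝ) (hκ0 : 0 ≤ κ) (hκ : κ < 1)
    (hκε : ∀ q q', 1 - ε (col q q') ≤ κ) (v : Q → ℝ) (sg : ℝ)
    (hr : ∀ (N : ℕ) (π : Fin (N + 1) → Q), 0 ≤ ∑ q' : Q,
      μ.real {ω | (∀ i : Fin (N + 1), X i ω = π i) ∧ X (N + 1) ω = q'} *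
        (sg * (ε (col (π (Fin.last N)) q') * ev (col (π (Fin.last N)) q') +
          (1 - ε (col (π (Fin.last N)) q')) * v q' - v (π (Fin.last N))))) :
    sg * v q0 ≤ sg * ∫ ω, Fpay ε (fun i => col (X i ω) (X (i + 1) ω)) ∂μ := by
  set ρ : Ω → ℕ → ℕ := fun ω i => col (X i ω) (X (i + 1) ω) with hρ
  have hρm : Measurable ρ := colseq_meas X hX col
  obtain ⟨C, hC⟩ : ∃ C, ∀ q, |v q| ≤ C := by
    obtain ⟨C, hC⟩ := (Set.finite_range fun q => |v q|).bddAbove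
    exact ⟨C, fun q => hC ⟨q, rfl⟩⟩
  let G : ℕ → Ω → ℝ := fun N ω => sN ev ε (ρ ω) N + pN ε (ρ ω) N * v (X N ω)
  have hp1 : ∀ ω N, |pN ε (ρ ω) N| ≤ 1 := by
    intro ω N
    rw [abs_of_nonneg (pN_nonneg hε _ N)]
    have := pN_anti hε (ρ ω) (Nat.zero_le N)
    simpa [pN] using this
  have hs1 : ∀ ω N, |sN ev ε (ρ ω) N| ≤ 1 := by
    intro ω N
    rw [abs_of_nonneg (sN_nonneg ev_wt hε _ N)]
    exact sN_le_one ev_wt hε _ N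
  have hGm : ∀ N, Measurable (G N) := fun N =>
    ((sN_meas ev ε N).comp hρm).add (((pN_meas ε N).comp hρm).mul (state_meas X hX v N))
  have hGb : ∀ N ω, ‖G N ω‖ ≤ 1 + C := by
    intro N ω
    refine (norm_add_le _ _).trans (add_le_add (hs1 ω N) ?_)
    rw [norm_mul]
    have := mul_le_mul (hp1 ω N) (hC (X N ω)) (abs_nonneg _) zero_le_one
    simpa using this
  have hGi : ∀ N, Integrable (G N) μ := fun N =>
    Integrable.of_bound (hGm N).aestronglyMeasurable (1 + C) (Filter.Eventually.of_forall (hGb N))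
  have hG0 : ∫ ω, G 0 ω ∂μ = v q0 := by
    have : G 0 =ᵐ[μ] fun _ => v q0 := by
      filter_upwards [h0] with ω hω
      simp [G, sN, pN, hω]
    rw [integral_congr_ae this]; simp
  have hstep : ∀ N, sg * ∫ ω, G N ω ∂μ ≤ sg * ∫ ω, G (N + 1) ω ∂μ := by
    intro N
    have h := step_integral μ X hX col ε hε N (fun q q' =>
      sg * (ε (col q q') * ev (col q q') + (1 - ε (col q q')) * v q' - v q)) (hr N)
    have h2 : (fun ω => pN ε (fun i => col (X i ω) (X (i + 1) ω)) N *
        (sg * (ε (col (X N ω) (X (N + 1) ω)) * ev (col (X N ω) (X (N + 1) ω)) +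
          (1 - ε (col (X N ω) (X (N + 1) ω))) * v (X (N + 1) ω) - v (X N ω)))) =
        fun ω => sg * (G (N + 1) ω - G N ω) := by
      funext ω
      simp only [G, sN_succ, pN_succ]
      simp only [hρ]
      ring
    simp only [h2] at h
    rw [integral_const_mul, integral_sub (hGi _) (hGi _)] at h
    linarith
  have hall : ∀ N, sg * v q0 ≤ sg * ∫ ω, G N ω ∂μ := by
    intro N
    induction N with
    | zero => rw [hG0]
    | succ N ih => exact ih.trans (hstep N)
  have hlim : Filter.Tendsto (fun N => ∫ ω, G N ω ∂μ) Filter.atTop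
      (nhds (∫ ω, Fpay ε (ρ ω) ∂μ)) := by
    refine tendsto_integral_of_dominated_convergence (fun _ => 1 + C)
      (fun N => (hGm N).aestronglyMeasurable) (integrable_const _)
      (fun N => Filter.Eventually.of_forall (hGb N)) (Filter.Eventually.of_forall fun ω => ?_)
    have hp : Filter.Tendsto (pN ε (ρ ω)) Filter.atTop (nhds 0) :=
      squeeze_zero (pN_nonneg hε _) (pN_le_pow hε (ρ ω) κ fun i => hκε _ _)
        (tendsto_pow_atTop_nhds_zero_of_lt_one hκ0 hκ)
    have hp0 : pInf ε (ρ ω) = 0 := tendsto_nhds_unique (pN_tendsto hε _) hp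
    have h1 : Filter.Tendsto (fun N => pN ε (ρ ω) N * v (X N ω)) Filter.atTop (nhds 0) := by
      refine squeeze_zero_norm (a := fun N => pN ε (ρ ω) N * C) (fun N => ?_) ?_
      · rw [norm_mul, Real.norm_of_nonneg (pN_nonneg hε _ N)]
        exact mul_le_mul_of_nonneg_left (hC _) (pN_nonneg hε _ N)
      · simpa using hp.mul_const C
    have := (sN_tendsto ev_wt hε (ρ ω)).add h1
    simpa [G, Fpay, hp0] using this
  exact ge_of_tendsto' (hlim.const_mul sg) hall

/-! ### Local games -/

theorem local_saddle {SA SB O : Type} [Fintype SA] [Fintype SB] [Nonempty SA] [Nonempty SB]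
    (ρ : SA → SB → O) (h : GFDetermined ρ) (f : O → ℝ) :
    ∃ x : ℝ, (∃ a, ∀ b, x ≤ f (ρ a b)) ∧ (∃ b, ∀ a, f (ρ a b) ≤ x) := by
  have hmin : ∀ a, ∃ b0, ∀ b, f (ρ a b0) ≤ f (ρ a b) := fun a => Finite.exists_min _
  choose mb hmb using hmin
  obtain ⟨a0, ha0⟩ := Finite.exists_max fun a => f (ρ a (mb a))
  refine ⟨f (ρ a0 (mb a0)), ⟨a0, hmb a0⟩, ?_⟩
  rcases h {o | f (ρ a0 (mb a0)) < f o} with ⟨a, ha⟩ | ⟨b, hb⟩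
  · exact absurd (ha0 a) (not_le.2 (ha (mb a)))
  · exact ⟨b, fun a => not_lt.1 (hb a)⟩

/-- One-step discounted payoff. -/
noncomputable def gval {Q D : Type} [Fintype Q] (dist : D → PMF Q) (col : Q → Q → ℕ)
    (ε : ℕ → ℝ) (v : Q → ℝ) (q : Q) (d : D) : ℝ :=
  ∑ q' : Q, (dist d q').toReal * (ε (col q q') * ev (col q q') + (1 - ε (col q q')) * v q')

theorem pmf_sum_toReal {α : Type} [Fintype α] (p : PMF α) : ∑ a, (p a).toReal = 1 := by
  rw [← ENNReal.toReal_sum fun a _ => p.apply_ne_top a, ← tsum_fintype (L := .unconditional α), p.tsum_coe]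
  simp

theorem gval_lip {Q D : Type} [Fintype Q] (dist : D → PMF Q) (col : Q → Q → ℕ)
    (ε : ℕ → ℝ) (hε : IsDisc ε) (κ : ℝ) (hκε : ∀ q q', 1 - ε (col q q') ≤ κ)
    (v w : Q → ℝ) (q : Q) (d : D) :
    gval dist col ε v q d ≤ gval dist col ε w q d + κ * Dist.dist v w := by
  have : κ * Dist.dist v w = ∑ q', (dist d q').toReal * (κ * Dist.dist v w) := by
    rw [← Finset.sum_mul, pmf_sum_toReal, one_mul]
  rw [this]
  unfold gval
  rw [← Finset.sum_add_distrib]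
  refine Finset.sum_le_sum fun q' _ => ?_
  rw [← mul_add]
  refine mul_le_mul_of_nonneg_left ?_ ENNReal.toReal_nonneg
  have h1 : v q' - w q' ≤ Dist.dist v w :=
    (le_abs_self _).trans ((Real.dist_eq _ _).symm.le.trans (dist_le_pi_dist v w q'))
  have h2 := mul_le_mul_of_nonneg_left h1 (show 0 ≤ 1 - ε (col q q') by linarith [(hε (col q q')).2])
  have h3 := mul_le_mul_of_nonneg_right (hκε q q') (dist_nonneg (x := v) (y := w))
  linarith

/-- Shapley: value vector and positional optimal strategies of the discounted game. -/
theorem shapley {A B Q D : Type} [Fintype A] [Fintype B] [Fintype Q] [Nonempty A] [Nonempty B]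
    (δ : Q → A → B → D) (dist : D → PMF Q) (col : Q → Q → ℕ)
    (hloc : ∀ q : Q, GFDetermined (δ q))
    (ε : ℕ → ℝ) (hε : IsDisc ε) (κ : ℝ) (hκ0 : 0 ≤ κ) (hκ : κ < 1)
    (hκε : ∀ q q', 1 - ε (col q q') ≤ κ) :
    ∃ (v : Q → ℝ) (sA : Q → A) (sB : Q → B),
      (∀ q b, v q ≤ gval dist col ε v q (δ q (sA q) b)) ∧
      (∀ q a, gval dist col ε v q (δ q a (sB q)) ≤ v q) := by
  have hs := fun (v : Q → ℝ) (q : Q) => local_saddle (δ q) (hloc q) (gval dist col ε v q)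
  choose T hA hB using hs
  have hle : ∀ v w q, T v q ≤ T w q + κ * Dist.dist v w := by
    intro v w q
    obtain ⟨a, ha⟩ := hA v q
    obtain ⟨b, hb⟩ := hB w q
    linarith [ha b, hb a, gval_lip dist col ε hε κ hκε v w q (δ q a b)]
  have hc : ContractingWith ⟨κ, hκ0⟩ T := by
    refine ⟨by exact_mod_cast hκ, LipschitzWith.of_dist_le_mul fun v w => ?_⟩
    change Dist.dist (T v) (T w) ≤ κ * Dist.dist v w
    refine (dist_pi_le_iff (mul_nonneg hκ0 dist_nonneg)).2 fun q => ?_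
    rw [Real.dist_eq, abs_le]
    have h1 := hle v w q
    have h2 := hle w v q
    rw [dist_comm w v] at h2
    constructor <;> linarith
  have hfix : T (hc.fixedPoint T) = hc.fixedPoint T := hc.fixedPoint_isFixedPt
  set v := hc.fixedPoint T
  choose sA hsA using hA v
  choose sB hsB using hB v
  rw [hfix] at hsA hsB
  exact ⟨v, sA, sB, hsA, hsB⟩

/-! ### The concrete process -/

theorem mem_cyl_ofFn {Q : Type} {k : ℕ} (π : Fin k → Q) (ρ : ℕ → Q) :
    ρ ∈ Cyl (List.ofFn π) ↔ ∀ i : Fin k, ρ i = π i := by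
  constructor
  · intro h i
    have := h i (by simp)
    simpa using this
  · intro h i hi
    have := h ⟨i, by simpa using hi⟩
    simpa using this

theorem cyl_meas {Q : Type} (w : List Q) : @MeasurableSet _ (BorelSeq Q) (Cyl w) :=
  MeasurableSpace.measurableSet_generateFrom ⟨w, rfl⟩

theorem coord_meas {Q : Type} [Fintype Q] (k : ℕ) (q : Q) :
    @MeasurableSet _ (BorelSeq Q) {ρ : ℕ → Q | ρ k = q} := by
  have : {ρ : ℕ → Q | ρ k = q} =
      ⋃ π : {π : Fin (k + 1) → Q // π (Fin.last k) = q}, Cyl (List.ofFn π.1) := by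
    ext ρ
    simp only [Set.mem_iUnion, mem_cyl_ofFn]
    constructor
    · intro h
      exact ⟨⟨fun i => ρ i, h⟩, fun i => rfl⟩
    · rintro ⟨⟨π, hπ⟩, h⟩
      exact (h (Fin.last k)).trans hπ
  rw [this]
  exact @MeasurableSet.iUnion _ _ (BorelSeq Q) _ _ fun π => cyl_meas _

theorem step_alg {A B Q D : Type} [Fintype A] [Fintype B] [Fintype Q]
    (α : PMF A) (β : PMF B) (δ : A → B → D) (dist : D → PMF Q) (R : Q → ℝ) (x sg : ℝ)
    (h : ∀ a b, α a ≠ 0 → β b ≠ 0 → 0 ≤ sg * ((∑ q', (dist (δ a b) q').toReal * R q') - x)) :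
    0 ≤ ∑ q', (∑ a, ∑ b, α a * β b * dist (δ a b) q').toReal * (sg * (R q' - x)) := by
  have hne : ∀ a b q', α a * β b * dist (δ a b) q' ≠ ⊤ := fun a b q' =>
    ENNReal.mul_ne_top (ENNReal.mul_ne_top (α.apply_ne_top a) (β.apply_ne_top b))
      (PMF.apply_ne_top _ _)
  have e1 : ∀ q', (∑ a, ∑ b, α a * β b * dist (δ a b) q').toReal * (sg * (R q' - x)) =
      ∑ a, ∑ b, (α a).toReal * (β b).toReal *
        ((dist (δ a b) q').toReal * (sg * (R q' - x))) := by
    intro q'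
    rw [ENNReal.toReal_sum fun a _ => ENNReal.sum_ne_top.2 fun b _ => hne a b q', Finset.sum_mul]
    refine Finset.sum_congr rfl fun a _ => ?_
    rw [ENNReal.toReal_sum fun b _ => hne a b q', Finset.sum_mul]
    refine Finset.sum_congr rfl fun b _ => ?_
    rw [ENNReal.toReal_mul, ENNReal.toReal_mul]
    ring
  simp_rw [e1]
  rw [Finset.sum_comm]
  refine Finset.sum_nonneg fun a _ => ?_
  rw [Finset.sum_comm]
  refine Finset.sum_nonneg fun b _ => ?_
  rw [← Finset.mul_sum]
  by_cases ha : α a = 0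
  · simp [ha]
  by_cases hb : β b = 0
  · simp [hb]
  refine mul_nonneg (mul_nonneg ENNReal.toReal_nonneg ENNReal.toReal_nonneg) ?_
  refine (h a b ha hb).trans (le_of_eq ?_)
  have h1 := pmf_sum_toReal (dist (δ a b))
  calc sg * ((∑ q', (dist (δ a b) q').toReal * R q') - x)
      = sg * ((∑ q', (dist (δ a b) q').toReal * R q') - (∑ q', (dist (δ a b) q').toReal) * x) := by
        rw [h1, one_mul]
    _ = _ := by
        rw [Finset.sum_mul, ← Finset.sum_sub_distrib, Finset.mul_sum]
        exact Finset.sum_congr rfl fun q' _ => by ring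

theorem histOf_snoc {Q : Type} {N : ℕ} (π : Fin (N + 1) → Q) (q' : Q) (i : Fin N) :
    histOf (Fin.snoc π q' : Fin (N + 2) → Q) i.castSucc = histOf π i := by
  unfold histOf
  congr 1
  funext j
  have : (Fin.castLE (Nat.le_succ_of_le i.castSucc.isLt.le) j : Fin (N + 2)) =
      Fin.castSucc (Fin.castLE (Nat.le_succ_of_le i.isLt.le) j) := rfl
  rw [this]
  exact Fin.snoc_castSucc (α := fun _ => Q) _ _ _

theorem histOf_last {Q : Type} {N : ℕ} (π : Fin (N + 1) → Q) (q' : Q) :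
    histOf (Fin.snoc π q' : Fin (N + 2) → Q) (Fin.last N) =
      List.ofFn (fun j : Fin N => π j.castSucc) := by
  unfold histOf
  congr 1
  funext j
  have : (Fin.castLE (Nat.le_succ_of_le (Fin.last N).isLt.le) j : Fin (N + 2)) =
      Fin.castSucc (Fin.castSucc (j : Fin N)) := rfl
  rw [this]
  exact Fin.snoc_castSucc (α := fun _ => Q) _ _ _

section Main

/-- Expected payoff. -/
noncomputable def Jpay {A B Q : Type} (col : Q → Q → ℕ)
    (P : (List Q → Q → PMF A) → (List Q → Q → PMF B) → @Measure (ℕ → Q) (BorelSeq Q))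
    (ε : ℕ → ℝ) (tA : List Q → Q → PMF A) (tB : List Q → Q → PMF B) : ℝ :=
  @integral _ _ _ _ (BorelSeq Q) (P tA tB) fun π => Fpay ε (colorSeq col π)

theorem J_bound {A B Q D : Type}
    [Fintype A] [Fintype B] [Fintype Q]
    (q0 : Q) (δ : Q → A → B → D) (dist : D → PMF Q) (col : Q → Q → ℕ)
    (tA : List Q → Q → PMF A) (tB : List Q → Q → PMF B)
    (μ : @Measure (ℕ → Q) (BorelSeq Q))
    (hprob : μ Set.univ = 1)
    (hP : ∀ (k : ℕ) (π : Fin (k + 1) → Q),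
      μ (Cyl (List.ofFn π)) =
        if π 0 = q0 then
          ∏ i : Fin k, ∑ a : A, ∑ b : B,
            tA (histOf π i) (π i.castSucc) a * tB (histOf π i) (π i.castSucc) b *
              dist (δ (π i.castSucc) a b) (π i.succ)
        else 0)
    (ε : ℕ → ℝ) (hε : IsDisc ε) (κ : ℝ) (hκ0 : 0 ≤ κ) (hκ : κ < 1)
    (hκε : ∀ q q', 1 - ε (col q q') ≤ κ) (v : Q → ℝ) (sg : ℝ)
    (hopt : ∀ h q a b, tA h q a ≠ 0 → tB h q b ≠ 0 →
      0 ≤ sg * (gval dist col ε v q (δ q a b) - v q)) :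
    sg * v q0 ≤ sg * @integral _ _ _ _ (BorelSeq Q) μ fun π => Fpay ε (colorSeq col π) := by
  letI : MeasurableSpace (ℕ → Q) := BorelSeq Q
  haveI : IsProbabilityMeasure μ := ⟨hprob⟩
  have h0 : ∀ᵐ ω ∂μ, ω 0 = q0 := by
    have hset : {ω : ℕ → Q | ¬ ω 0 = q0} =
        ⋃ π : {π : Fin 1 → Q // π 0 ≠ q0}, Cyl (List.ofFn π.1) := by
      ext ω
      simp only [Set.mem_iUnion, mem_cyl_ofFn]
      constructor
      · intro h
        refine ⟨⟨fun i => ω i, h⟩, fun i => rfl⟩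
      · rintro ⟨⟨π, hπ⟩, h⟩ h'
        exact hπ ((h 0).symm.trans h')
    rw [ae_iff, hset, measure_iUnion_null_iff]
    rintro ⟨π, hπ⟩
    rw [hP 0 π, if_neg hπ]
  refine disc_bound μ (fun k ω => ω k) (fun k q => coord_meas k q) q0 h0 col ε hε κ hκ0 hκ hκε
    v sg ?_
  intro N π
  have hstep : ∀ q', μ.real {ω : ℕ → Q | (∀ i : Fin (N + 1), ω i = π i) ∧ ω (N + 1) = q'} =
      μ.real (Cyl (List.ofFn π)) * (∑ a : A, ∑ b : B,
        tA (List.ofFn (fun j : Fin N => π j.castSucc)) (π (Fin.last N)) a *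
        tB (List.ofFn (fun j : Fin N => π j.castSucc)) (π (Fin.last N)) b *
          dist (δ (π (Fin.last N)) a b) q').toReal := by
    intro q'
    have hset : {ω : ℕ → Q | (∀ i : Fin (N + 1), ω i = π i) ∧ ω (N + 1) = q'} =
        Cyl (List.ofFn (Fin.snoc π q' : Fin (N + 2) → Q)) := by
      ext ω
      rw [mem_cyl_ofFn, Fin.forall_fin_succ']
      simp
    rw [hset]
    unfold Measure.real
    rw [← ENNReal.toReal_mul]
    congr 1
    rw [hP (N + 1), hP N, Fin.prod_univ_castSucc]
    have hz : (Fin.snoc π q' : Fin (N + 2) → Q) 0 = π 0 := by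
      have : (0 : Fin (N + 2)) = Fin.castSucc 0 := rfl
      rw [this]
      exact Fin.snoc_castSucc (α := fun _ => Q) _ _ _
    rw [hz]
    split_ifs with hq
    · congr 1
      · refine Finset.prod_congr rfl fun i _ => ?_
        rw [histOf_snoc, ← Fin.castSucc_succ]
        simp only [Fin.snoc_castSucc]
      · rw [histOf_last, Fin.succ_last]
        simp only [Fin.snoc_castSucc, Fin.snoc_last]
    · simp
  simp_rw [hstep, mul_assoc]
  rw [← Finset.mul_sum]
  refine mul_nonneg measureReal_nonneg ?_
  have := step_alg (tA (List.ofFn (fun j : Fin N => π j.castSucc)) (π (Fin.last N)))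
    (tB (List.ofFn (fun j : Fin N => π j.castSucc)) (π (Fin.last N))) (δ (π (Fin.last N))) dist
    (fun q' => ε (col (π (Fin.last N)) q') * ev (col (π (Fin.last N)) q') +
          (1 - ε (col (π (Fin.last N)) q')) * v q') (v (π (Fin.last N))) sg
    (fun a b ha hb => hopt _ _ a b ha hb)
  simpa only [mul_assoc] using this

/-- Positional saddle point for the interpolating payoff. -/
def Saddle {A B Q : Type} (col : Q → Q → ℕ)
    (P : (List Q → Q → PMF A) → (List Q → Q → PMF B) → @Measure (ℕ → Q) (BorelSeq Q))
    (ε : ℕ → ℝ) (sA : Q → A) (sB : Q → B) : Prop :=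
  ∀ tA tB, Jpay col P ε tA (toStratB col fun _ q => sB q) ≤
      Jpay col P ε (toStratA col fun _ q => sA q) (toStratB col fun _ q => sB q) ∧
    Jpay col P ε (toStratA col fun _ q => sA q) (toStratB col fun _ q => sB q) ≤
      Jpay col P ε (toStratA col fun _ q => sA q) tB

theorem saddle_all {A B Q D : Type}
    [Fintype A] [Fintype B] [Fintype Q]
    [Nonempty A] [Nonempty B]
    (q0 : Q) (δ : Q → A → B → D) (dist : D → PMF Q) (col : Q → Q → ℕ)
    (n : ℕ) (hcol : ∀ q q' : Q, col q q' ≤ n)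
    (hloc : ∀ q : Q, GFDetermined (δ q))
    (P : (List Q → Q → PMF A) → (List Q → Q → PMF B) →
      @Measure (ℕ → Q) (BorelSeq Q))
    (hprob : ∀ tA tB, P tA tB Set.univ = 1)
    (hP : ∀ (tA : List Q → Q → PMF A) (tB : List Q → Q → PMF B)
        (k : ℕ) (π : Fin (k + 1) → Q),
      P tA tB (Cyl (List.ofFn π)) =
        if π 0 = q0 then
          ∏ i : Fin k, ∑ a : A, ∑ b : B,
            tA (histOf π i) (π i.castSucc) a * tB (histOf π i) (π i.castSucc) b *
              dist (δ (π i.castSucc) a b) (π i.succ)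
        else 0) (j : ℕ) :
    ∀ ε : ℕ → ℝ, (∀ c, c < j → ε c = 0) → (∀ c, j ≤ c → 0 < ε c ∧ ε c < 1) →
      ∃ sA sB, Saddle col P ε sA sB := by
  induction j with
  | zero =>
    intro ε _ hε
    have hd : IsDisc ε := fun c => ⟨(hε c (Nat.zero_le c)).1.le, (hε c (Nat.zero_le c)).2⟩
    obtain ⟨c0, -, hc0⟩ := Finset.exists_min_image (Finset.range (n + 1)) ε ⟨0, by simp⟩
    have hκ : ∀ q q', 1 - ε (col q q') ≤ 1 - ε c0 := fun q q' => by
      have := hc0 (col q q') (Finset.mem_range.2 (Nat.lt_succ_of_le (hcol q q')))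
      linarith
    have hκ0 : 0 ≤ 1 - ε c0 := by linarith [(hd c0).2]
    have hκ1 : 1 - ε c0 < 1 := by linarith [(hε c0 (Nat.zero_le _)).1]
    obtain ⟨v, sA, sB, hA, hB⟩ := shapley δ dist col hloc ε hd (1 - ε c0) hκ0 hκ1 hκ
    have h1 : ∀ tB, v q0 ≤ Jpay col P ε (toStratA col fun _ q => sA q) tB := by
      intro tB
      have := J_bound q0 δ dist col (toStratA col fun _ q => sA q) tB _ (hprob _ _) (hP _ _)
        ε hd _ hκ0 hκ1 hκ v 1 (by
          intro h q a b ha _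
          have : a = sA q := by
            by_contra hne
            exact ha (by simp [toStratA, PMF.pure_apply, hne])
          subst this
          linarith [hA q b])
      simpa [Jpay] using this
    have h2 : ∀ tA, Jpay col P ε tA (toStratB col fun _ q => sB q) ≤ v q0 := by
      intro tA
      have := J_bound q0 δ dist col tA (toStratB col fun _ q => sB q) _ (hprob _ _) (hP _ _)
        ε hd _ hκ0 hκ1 hκ v (-1) (by
          intro h q a b _ hb
          have : b = sB q := by
            by_contra hne
            exact hb (by simp [toStratB, PMF.pure_apply, hne])
          subst this
          linarith [hB q a])
      unfold Jpay
      linarith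
    exact ⟨sA, sB, fun tA tB => ⟨(h2 tA).trans (h1 _), (h2 _).trans (h1 tB)⟩⟩
  | succ j ih =>
    intro ε hlow hhigh
    let x : ℕ → ℝ := fun k => 1 / ((k : ℝ) + 2)
    have hx : ∀ k, 0 < x k ∧ x k < 1 := by
      intro k
      have hk : (0 : ℝ) ≤ k := Nat.cast_nonneg k
      refine ⟨by positivity, ?_⟩
      rw [div_lt_one (by linarith)]
      linarith
    have hxt : Filter.Tendsto x Filter.atTop (nhds 0) := by
      have := (Filter.tendsto_add_atTop_iff_nat 1).2 (tendsto_one_div_add_atTop_nhds_zero_nat (𝕜 := ℝ))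
      refine this.congr fun k => ?_
      simp only [x]; push_cast; ring_nf
    let εs : ℕ → ℕ → ℝ := fun k => Function.update ε j (x k)
    have hd : IsDisc ε := by
      intro c
      rcases lt_or_ge c (j + 1) with h | h
      · rw [hlow c h]; norm_num
      · exact ⟨(hhigh c h).1.le, (hhigh c h).2⟩
    have hds : ∀ k, IsDisc (εs k) := by
      intro k c
      by_cases h : c = j
      · subst h; simp only [εs, Function.update_self]; exact ⟨(hx k).1.le, (hx k).2⟩
      · simp only [εs, Function.update_of_ne h]; exact hd c
    have hconv : ∀ c, Filter.Tendsto (fun k => εs k c) Filter.atTop (nhds (ε c)) := by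
      intro c
      by_cases h : c = j
      · subst h; simp only [εs, Function.update_self]; rw [hlow c (by omega)]; exact hxt
      · simp only [εs, Function.update_of_ne h]; exact tendsto_const_nhds
    have hsad : ∀ k, ∃ s : (Q → A) × (Q → B), Saddle col P (εs k) s.1 s.2 := by
      intro k
      obtain ⟨sA, sB, h⟩ := ih (εs k)
        (by
          intro c hc
          simp only [εs, Function.update_of_ne hc.ne]
          exact hlow c (by omega))
        (by
          intro c hc
          by_cases h : c = j
          · subst h; simp only [εs, Function.update_self]; exact hx k
          · simp only [εs, Function.update_of_ne h]; exact hhigh c (by omega))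
      exact ⟨(sA, sB), h⟩
    choose s hs using hsad
    obtain ⟨⟨sA, sB⟩, hfreq⟩ : ∃ y, ∃ᶠ k in Filter.atTop, s k = y := by
      by_contra hcon
      simp only [not_exists, Filter.not_frequently] at hcon
      have := Filter.eventually_all.2 hcon
      obtain ⟨k, hk⟩ := this.exists
      exact hk (s k) rfl
    have hJ : ∀ tA tB, Filter.Tendsto (fun k => Jpay col P (εs k) tA tB) Filter.atTop
        (nhds (Jpay col P ε tA tB)) := by
      intro tA tB
      letI : MeasurableSpace (ℕ → Q) := BorelSeq Q
      haveI : IsProbabilityMeasure (P tA tB) := ⟨hprob tA tB⟩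
      have hcm : Measurable (colorSeq col) :=
        colseq_meas (fun k (ω : ℕ → Q) => ω k) (fun k q => coord_meas k q) col
      refine tendsto_integral_of_dominated_convergence (fun _ => 1)
        (fun k => ((Fpay_meas (hds k)).comp hcm).aestronglyMeasurable) (integrable_const _)
        (fun k => Filter.Eventually.of_forall fun π => ?_)
        (Filter.Eventually.of_forall fun π => ?_)
      · rw [Real.norm_of_nonneg (Fpay_nonneg (hds k) _)]
        exact Fpay_le_one (hds k) _
      · refine Fpay_tendsto hd hds hconv j ?_ ?_ _ n fun i => hcol _ _
        · intro c hc
          refine ⟨hlow c (by omega), fun k => ?_⟩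
          simp only [εs, Function.update_of_ne hc.ne]
          exact hlow c (by omega)
        · intro c hc
          exact (hhigh c (by omega)).1
    refine ⟨sA, sB, fun tA tB => ⟨?_, ?_⟩⟩
    · exact le_of_tendsto_of_tendsto_of_frequently (hJ _ _) (hJ _ _) (hfreq.mono fun k hk => by
        have := hs k; rw [hk] at this; exact (this tA tB).1)
    · exact le_of_tendsto_of_tendsto_of_frequently (hJ _ _) (hJ _ _) (hfreq.mono fun k hk => by
        have := hs k; rw [hk] at this; exact (this tA tB).2)

theorem Jpay_final {A B Q : Type} [Fintype Q] (col : Q → Q → ℕ) (n : ℕ)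
    (hcol : ∀ q q' : Q, col q q' ≤ n)
    (P : (List Q → Q → PMF A) → (List Q → Q → PMF B) → @Measure (ℕ → Q) (BorelSeq Q))
    (ε : ℕ → ℝ) (hε : ∀ c, c ≤ n → ε c = 0)
    (tA : List Q → Q → PMF A) (tB : List Q → Q → PMF B) :
    Jpay col P ε tA tB = (P tA tB (UW col Wpar)).toReal := by
  letI : MeasurableSpace (ℕ → Q) := BorelSeq Q
  have hcm : Measurable (colorSeq col) :=
    colseq_meas (fun k (ω : ℕ → Q) => ω k) (fun k q => coord_meas k q) col
  have hm : MeasurableSet (UW col Wpar) := hcm Wpar_meas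
  have hf : (fun π : ℕ → Q => Fpay ε (colorSeq col π)) =
      (UW col Wpar).indicator (fun _ => (1 : ℝ)) := by
    funext π
    have h0 : ∀ i, ε (colorSeq col π i) = 0 := fun i => hε _ (hcol _ _)
    have h1 : sInfty ev ε (colorSeq col π) = 0 := by
      simp [sInfty, sN, h0]
    have h2 : pInf ε (colorSeq col π) = 1 := by
      simp [pInf, pN, h0]
    rw [Fpay, h1, h2, zero_add, one_mul]
    rfl
  unfold Jpay
  rw [hf, integral_indicator_const _ hm]
  simp [Measure.real]

end Main

/-- Positional determinacy of finite locally determined stochastic concurrent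
parity games: there are positional color strategies `sA`, `sB` that are optimal,
and the values of the two players coincide. Here `P tA tB` is the probability
measure on plays induced by the state strategies `tA, tB`, axiomatized by its
(characterizing) values on cylinder sets. -/
theorem stmt18 {A B Q D : Type}
    [Fintype A] [Fintype B] [Fintype Q] [Fintype D]
    [Nonempty A] [Nonempty B] [Nonempty Q] [Nonempty D]
    (q0 : Q) (δ : Q → A → B → D) (dist : D → PMF Q) (col : Q → Q → ℕ)
    (m n : ℕ) (hmn : m ≤ n) (hcol : ∀ q q' : Q, col q q' ∈ Finset.Icc m n)
    (hloc : ∀ q : Q, GFDetermined (δ q))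
    (P : (List Q → Q → PMF A) → (List Q → Q → PMF B) →
      @Measure (ℕ → Q) (BorelSeq Q))
    (hprob : ∀ tA tB, P tA tB Set.univ = 1)
    (hP : ∀ (tA : List Q → Q → PMF A) (tB : List Q → Q → PMF B)
        (k : ℕ) (π : Fin (k + 1) → Q),
      P tA tB (Cyl (List.ofFn π)) =
        if π 0 = q0 then
          ∏ i : Fin k, ∑ a : A, ∑ b : B,
            tA (histOf π i) (π i.castSucc) a * tB (histOf π i) (π i.castSucc) b *
              dist (δ (π i.castSucc) a b) (π i.succ)
        else 0) :
    valA col P (UW col Wpar) = valB col P (UW col Wpar) ∧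
    (∃ sA : Q → A,
      valSA col P (UW col Wpar) (fun _ q => sA q) = valA col P (UW col Wpar)) ∧
    (∃ sB : Q → B,
      valSB col P (UW col Wpar) (fun _ q => sB q) = valB col P (UW col Wpar)) := by
  have hcol' : ∀ q q' : Q, col q q' ≤ n := fun q q' => (Finset.mem_Icc.1 (hcol q q')).2
  obtain ⟨sA, sB, hs⟩ := saddle_all q0 δ dist col n hcol' hloc P hprob hP (n + 1)
    (fun c => if c < n + 1 then 0 else 1 / 2) (fun c hc => if_pos hc)
    (fun c hc => by rw [if_neg (not_lt.2 hc)]; norm_num)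
  have hfin : ∀ tA tB, P tA tB (UW col Wpar) ≠ ⊤ := fun tA tB =>
    ne_top_of_le_ne_top ENNReal.one_ne_top ((measure_mono (Set.subset_univ _)).trans
      (hprob tA tB).le)
  have hJ := fun tA tB => Jpay_final col n hcol' P (fun c => if c < n + 1 then 0 else 1 / 2)
    (fun c hc => if_pos (Nat.lt_succ_of_le hc)) tA tB
  simp only [Saddle, hJ] at hs
  have h1 : ∀ tA, P tA (toStratB col fun _ q => sB q) (UW col Wpar) ≤
      P (toStratA col fun _ q => sA q) (toStratB col fun _ q => sB q) (UW col Wpar) := fun tA =>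
    (ENNReal.toReal_le_toReal (hfin _ _) (hfin _ _)).1
      (hs tA (toStratB col fun _ q => sB q)).1
  have h2 : ∀ tB, P (toStratA col fun _ q => sA q) (toStratB col fun _ q => sB q) (UW col Wpar) ≤
      P (toStratA col fun _ q => sA q) tB (UW col Wpar) := fun tB =>
    (ENNReal.toReal_le_toReal (hfin _ _) (hfin _ _)).1
      (hs (toStratA col fun _ q => sA q) tB).2
  set p := P (toStratA col fun _ q => sA q) (toStratB col fun _ q => sB q) (UW col Wpar) with hp
  have hA1 : p ≤ valSA col P (UW col Wpar) (fun _ q => sA q) := le_iInf h2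
  have hB1 : valSB col P (UW col Wpar) (fun _ q => sB q) ≤ p := iSup_le h1
  have hA2 : valSA col P (UW col Wpar) (fun _ q => sA q) ≤ valA col P (UW col Wpar) :=
    le_iSup (fun s => valSA col P (UW col Wpar) s) _
  have hB2 : valB col P (UW col Wpar) ≤ valSB col P (UW col Wpar) (fun _ q => sB q) :=
    iInf_le (fun s => valSB col P (UW col Wpar) s) _
  have hAB : valA col P (UW col Wpar) ≤ valB col P (UW col Wpar) := by
    refine iSup_le fun s => le_iInf fun s' => ?_
    exact (iInf_le _ (toStratB col s')).trans
      (le_iSup (fun tA => P tA (toStratB col s') (UW col Wpar)) (toStratA col s))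
  refine ⟨le_antisymm hAB ((hB2.trans hB1).trans (hA1.trans hA2)), ⟨sA, ?_⟩, ⟨sB, ?_⟩⟩
  · exact le_antisymm hA2 (hAB.trans ((hB2.trans hB1).trans hA1))
  · exact le_antisymm (hB1.trans (hA1.trans (hA2.trans hAB))) hB2
end

section
/- Let C = ⟨A, B, Q, q0, D, δ, dist, K, col⟩ be a finite stochastic concurrent arena that is locally determined, and let W ⊆ K^ω be a Borel tail objective. If val_A = 1 or val_B = 0, then the game ⟨C, W⟩ is determined: val_A = val_B and there exist color strategies s_A, s_B with inf over all state strategies t_B of P^{s_A,t_B}(U_W) = val_A and sup over all state strategies t_A of P^{t_A,s_B}(U_W) = val_B. -/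
open MeasureTheory
open scoped Classical ENNReal

universe u

/-- Prepending a finite word to an infinite sequence. -/
def prependWord {K : Type u} (w : List K) (ρ : ℕ → K) : ℕ → K :=
  fun i => if h : i < w.length then w.get ⟨i, h⟩ else ρ (i - w.length)

/-- `W` is a tail objective: membership is invariant under adding and removing
finite prefixes. -/
def TailObj {K : Type u} (W : Set (ℕ → K)) : Prop :=
  ∀ (ρ : ℕ → K) (w : List K), ρ ∈ W ↔ prependWord w ρ ∈ W


/-! ### Histories (most recent state first) -/

/-- The reversed prefix of length `n` of an infinite play. -/
def rp {Q : Type} (π : ℕ → Q) : ℕ → List Q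
  | 0 => []
  | n + 1 => π n :: rp π n

theorem length_rp {Q : Type} (π : ℕ → Q) (n : ℕ) : (rp π n).length = n := by
  induction n with
  | zero => rfl
  | succ n ih => simp [rp, ih]

/-- `g` is a supermartingale for every action. -/
def IsSup {Q B : Type} [Fintype Q] (κ : List Q → B → Q → ℝ≥0∞) (g : List Q → ℝ≥0∞) : Prop :=
  ∀ h b, ∑ q, κ h b q * g (q :: h) ≤ g h

/-- `g` covers all plays of `E` extending `h`. -/
def Cov {Q : Type} (g : List Q → ℝ≥0∞) (h : List Q) (E : Set (ℕ → Q)) : Prop :=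
  ∀ π ∈ E, rp π h.length = h → ∃ n, h.length ≤ n ∧ 1 ≤ g (rp π n)

/-- The capacity of `E` from `h`. -/
noncomputable def Gam {Q B : Type} [Fintype Q] (κ : List Q → B → Q → ℝ≥0∞)
    (E : Set (ℕ → Q)) (h : List Q) : ℝ≥0∞ :=
  ⨅ (g : List Q → ℝ≥0∞) (_ : IsSup κ g) (_ : Cov g h E), g h

section Cap

set_option linter.unusedSectionVars false

variable {Q B : Type} [Fintype Q] {κ : List Q → B → Q → ℝ≥0∞}

theorem gam_le {E : Set (ℕ → Q)} {h : List Q} {g : List Q → ℝ≥0∞}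
    (hg : IsSup κ g) (hc : Cov g h E) : Gam κ E h ≤ g h :=
  iInf_le_of_le g (iInf_le_of_le hg (iInf_le_of_le hc le_rfl))

theorem exists_of_gam_lt {E : Set (ℕ → Q)} {h : List Q} {x : ℝ≥0∞} (hx : Gam κ E h < x) :
    ∃ g, IsSup κ g ∧ Cov g h E ∧ g h < x := by
  simp only [Gam, iInf_lt_iff] at hx
  obtain ⟨g, h1, h2, h3⟩ := hx
  exact ⟨g, h1, h2, h3⟩

theorem gam_le_one (hκ : ∀ h b, ∑ q, κ h b q = 1) (E : Set (ℕ → Q)) (h : List Q) :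
    Gam κ E h ≤ 1 :=
  gam_le (g := fun _ => 1) (fun h b => by simp [hκ]) (fun π _ _ => ⟨_, le_rfl, le_rfl⟩)

theorem gam_mono {E F : Set (ℕ → Q)} (hEF : E ⊆ F) (h : List Q) : Gam κ E h ≤ Gam κ F h := by
  refine le_iInf fun g => le_iInf fun h1 => le_iInf fun h2 => ?_
  exact gam_le h1 (fun π hπ => h2 π (hEF hπ))

theorem gam_eq_zero_of_empty {E : Set (ℕ → Q)} {h : List Q}
    (hE : ∀ π ∈ E, rp π h.length ≠ h) : Gam κ E h = 0 := by
  have := gam_le (κ := κ) (E := E) (h := h) (g := fun _ => 0) (fun h b => by simp)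
    (fun π hπ h' => absurd h' (hE π hπ))
  simpa using this

theorem isSup_gam (hκ : ∀ h b, ∑ q, κ h b q = 1) (E : Set (ℕ → Q)) : IsSup κ (Gam κ E) := by
  intro h b
  refine le_iInf fun g => le_iInf fun h1 => le_iInf fun h2 => ?_
  by_cases hg : 1 ≤ g h
  · refine le_trans ?_ hg
    calc ∑ q, κ h b q * Gam κ E (q :: h) ≤ ∑ q, κ h b q * 1 := by
          gcongr; exact gam_le_one hκ _ _
      _ = 1 := by simp [hκ]
  · refine le_trans ?_ (h1 h b)
    gcongr with q
    refine gam_le h1 ?_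
    intro π hπ hq
    simp only [List.length_cons, rp, List.cons.injEq] at hq
    obtain ⟨n, hn, hn'⟩ := h2 π hπ hq.2
    refine ⟨n, ?_, hn'⟩
    rcases hn.eq_or_lt with e | e
    · exfalso; rw [← e, hq.2] at hn'; exact hg hn'
    · simpa using e

/-- First hitting history. -/
noncomputable def stp {Q : Type} (H : List Q → Prop) : List Q → Option (List Q)
  | [] => if H [] then some [] else none
  | q :: h => match stp H h with
    | some x => some x
    | none => if H (q :: h) then some (q :: h) else none

theorem stp_spec {H : List Q → Prop} {h x : List Q} (e : stp H h = some x) : H x := by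
  induction h with
  | nil => simp only [stp] at e; split_ifs at e with hh; simp_all
  | cons q h ih =>
    simp only [stp] at e
    split at e
    · next y hy => simp only [Option.some.injEq] at e; subst e; exact ih hy
    · split_ifs at e with hh; simp_all

theorem stp_some {H : List Q → Prop} {h : List Q} (e : H h) : ∃ x, stp H h = some x := by
  cases h with
  | nil => simp [stp, e]
  | cons q h =>
    simp only [stp]
    split
    · exact ⟨_, rfl⟩
    · simp [e]

theorem stp_rp {H : List Q → Prop} {π : ℕ → Q} {n : ℕ} {x : List Q}
    (e : stp H (rp π n) = some x) : x.length ≤ n ∧ rp π x.length = x := by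
  induction n with
  | zero =>
    simp only [stp, rp] at e; split_ifs at e with hh
    simp only [Option.some.injEq] at e; subst e; simp [rp]
  | succ n ih =>
    simp only [stp, rp] at e
    split at e
    · next y hy =>
      simp only [Option.some.injEq] at e; subst e
      exact ⟨(ih hy).1.trans (Nat.le_succ _), (ih hy).2⟩
    · split_ifs at e with hh
      simp only [Option.some.injEq] at e; subst e
      simp [rp, length_rp]

theorem stp_suffix {H : List Q → Prop} {h x : List Q} (e : stp H h = some x) : x <:+ h := by
  induction h with
  | nil =>
    simp only [stp] at e; split_ifs at e with hh
    simp only [Option.some.injEq] at e; subst e; simp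
  | cons q h ih =>
    simp only [stp] at e
    split at e
    · next y hy =>
      simp only [Option.some.injEq] at e; subst e
      exact (ih hy).trans (List.suffix_cons _ _)
    · split_ifs at e with hh
      simp only [Option.some.injEq] at e; subst e; simp

theorem stp_mono {H : List Q → Prop} {π : ℕ → Q} {n m : ℕ} {x : List Q}
    (e : stp H (rp π n) = some x) (hm : n ≤ m) : stp H (rp π m) = some x := by
  induction m, hm using Nat.le_induction with
  | base => exact e
  | succ m hm ih => simp [rp, stp, ih]

theorem piece {E : Set (ℕ → Q)} {h : List Q} {g : List Q → ℝ≥0∞} (hg : IsSup κ g)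
    (Hit : List Q → Prop) (h1 : ∀ h', Hit h' → Gam κ E h' < g h')
    (h2 : ∀ π ∈ E, rp π h.length = h → ∃ n, h.length ≤ n ∧ Hit (rp π n)) :
    Gam κ E h ≤ g h := by
  have h3 : ∀ h', ∃ gg, Hit h' → IsSup κ gg ∧ Cov gg h' E ∧ gg h' < g h' := by
    intro h'
    by_cases hh : Hit h'
    · obtain ⟨gg, hgg⟩ := exists_of_gam_lt (h1 h' hh)
      exact ⟨gg, fun _ => hgg⟩
    · exact ⟨fun _ => 0, fun hh' => absurd hh' hh⟩
  choose G hG using h3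
  set H : List Q → Prop := fun h' => h.length ≤ h'.length ∧ Hit h' with hH
  set g' : List Q → ℝ≥0∞ := fun x => match stp H x with
    | some y => G y x
    | none => g x with hg'
  have key : ∀ q x, stp H x = none → g' (q :: x) ≤ g (q :: x) := by
    intro q x hx
    simp only [hg', stp, hx]
    by_cases hh : H (q :: x)
    · simp only [hh, if_true]; exact (hG _ hh.2).2.2.le
    · simp [hh]
  have hs : IsSup κ g' := by
    intro x b
    cases hx : stp H x with
    | some y =>
      have e1 : g' x = G y x := by simp [hg', hx]
      have e2 : ∀ q, g' (q :: x) = G y (q :: x) := by intro q; simp [hg', stp, hx]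
      simp only [e1, e2]
      exact (hG y (stp_spec hx).2).1 x b
    | none =>
      have e1 : g' x = g x := by simp [hg', hx]
      rw [e1]
      refine le_trans ?_ (hg x b)
      gcongr with q
      exact key q x hx
  have hle : g' h ≤ g h := by
    cases hx : stp H h with
    | none => simp [hg', hx]
    | some y =>
      have := stp_spec hx
      have hy : y = h := by
        exact (stp_suffix hx).eq_of_length_le this.1
      simp only [hg', hx]; subst hy
      exact (hG y this.2).2.2.le
  refine le_trans (gam_le hs ?_) hle
  intro π hπ hh
  obtain ⟨n, hn, hn'⟩ := h2 π hπ hh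
  obtain ⟨y, hy⟩ := stp_some (H := H) (h := rp π n) ⟨by rw [length_rp]; exact hn, hn'⟩
  have hyH := stp_spec hy
  have hyr := stp_rp hy
  obtain ⟨m, hm, hm'⟩ := (hG y hyH.2).2.1 π hπ hyr.2
  have hy' : stp H (rp π y.length) = some y := by
    obtain ⟨z, hz⟩ := stp_some (H := H) (h := rp π y.length) (by rw [hyr.2]; exact hyH)
    have := stp_mono hz hyr.1
    rw [hy] at this
    rw [hz, this]
  have := stp_mono hy' hm
  exact ⟨m, hyH.1.trans hm, by simpa [hg', this] using hm'⟩

theorem zero_one {F : Set (ℕ → Q)} {θ : ℝ≥0∞} (hθ : θ < 1) (hF : ∀ h, Gam κ F h ≤ θ)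
    (h : List Q) : Gam κ F h = 0 := by
  by_contra hne
  obtain ⟨c, hc1, hc2⟩ := exists_between hθ
  have hc0 : c ≠ 0 := (lt_of_le_of_lt (zero_le) hc1).ne'
  have hct : c ≠ ⊤ := (hc2.trans ENNReal.one_lt_top).ne
  have hfin : Gam κ F h ≠ ⊤ := ((hF h).trans_lt (hθ.trans ENNReal.one_lt_top)).ne
  have hlt : Gam κ F h < Gam κ F h / c := by
    rw [ENNReal.lt_div_iff_mul_lt (Or.inl hc0) (Or.inl hct)]
    calc Gam κ F h * c < Gam κ F h * 1 := by
          exact (ENNReal.mul_lt_mul_iff_right hne hfin).2 hc2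
      _ = _ := mul_one _
  obtain ⟨g, h1, h2, h3⟩ := exists_of_gam_lt hlt
  have h4 : Gam κ F h ≤ c * g h := by
    refine piece (g := fun x => c * g x) ?_ (fun x => 1 ≤ g x) ?_ h2
    · intro x b
      calc ∑ q, κ x b q * (c * g (q :: x)) = c * ∑ q, κ x b q * g (q :: x) := by
            rw [Finset.mul_sum]; refine Finset.sum_congr rfl fun q _ => by ring
        _ ≤ c * g x := by gcongr; exact h1 x b
    · intro x hx
      calc Gam κ F x ≤ θ := hF x
        _ < c := hc1
        _ = c * 1 := (mul_one _).symm
        _ ≤ c * g x := by gcongr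
  rw [ENNReal.lt_div_iff_mul_lt (Or.inl hc0) (Or.inl hct), mul_comm] at h3
  exact absurd h4 (not_le.2 h3)

theorem gam_iUnion (hκ : ∀ h b, ∑ q, κ h b q = 1) {E : ℕ → Set (ℕ → Q)} (hE : Monotone E) :
    Gam κ (⋃ n, E n) [] ≤ ⨆ n, Gam κ (E n) [] := by
  set γ : List Q → ℝ≥0∞ := fun h => ⨆ n, Gam κ (E n) h with hγ
  have hγs : IsSup κ γ := by
    intro h b
    simp only [hγ, ENNReal.mul_iSup]
    rw [ENNReal.finsetSum_iSup_of_monotone]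
    · exact iSup_mono fun n => isSup_gam hκ (E n) h b
    · intro q n m hnm
      dsimp only
      gcongr
      exact gam_mono (hE hnm) _
  refine ENNReal.le_of_forall_lt_one_mul_le fun θ hθ => ?_
  refine ENNReal.le_of_forall_pos_le_add fun η hη _ => ?_
  by_cases hθ0 : θ = 0
  · simp [hθ0]
  have hθt : θ ≠ ⊤ := (hθ.trans ENNReal.one_lt_top).ne
  set F : ℕ → Set (ℕ → Q) := fun n => {π | π ∈ E n ∧ ∀ m, γ (rp π m) < θ} with hF
  have hF0 : ∀ n, Gam κ (F n) [] = 0 := by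
    intro n
    refine zero_one hθ ?_ []
    intro h
    by_cases hh : ∃ π ∈ F n, rp π h.length = h
    · obtain ⟨π, hπ, e⟩ := hh
      have h1 := hπ.2 h.length
      rw [e] at h1
      refine le_trans ?_ h1.le
      refine le_trans (gam_mono (fun π hπ => hπ.1) h) (le_iSup (fun n => Gam κ (E n) h) n)
    · push Not at hh
      rw [gam_eq_zero_of_empty hh]; exact zero_le
  obtain ⟨ε, hε, hεs⟩ := ENNReal.exists_pos_sum_of_countable (ε := (η : ℝ≥0∞))
    (by exact_mod_cast hη.ne') ℕ
  have hg : ∀ n, ∃ g, IsSup κ g ∧ Cov g [] (F n) ∧ g [] < ε n := by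
    intro n
    apply exists_of_gam_lt
    rw [hF0 n]; exact_mod_cast hε n
  choose g hg1 hg2 hg3 using hg
  have hle : Gam κ (⋃ n, E n) [] ≤ θ⁻¹ * γ [] + ∑' n, g n [] := by
    refine gam_le (g := fun h => θ⁻¹ * γ h + ∑' n, g n h) ?_ ?_
    · intro h b
      calc ∑ q, κ h b q * (θ⁻¹ * γ (q :: h) + ∑' n, g n (q :: h))
          = θ⁻¹ * ∑ q, κ h b q * γ (q :: h) + ∑' n, ∑ q, κ h b q * g n (q :: h) := by
            rw [Summable.tsum_finsetSum (fun _ _ => ENNReal.summable), Finset.mul_sum,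
              ← Finset.sum_add_distrib]
            refine Finset.sum_congr rfl fun q _ => ?_
            rw [ENNReal.tsum_mul_left]; ring
        _ ≤ θ⁻¹ * γ h + ∑' n, g n h := by
            gcongr with n
            · exact hγs h b
            · exact hg1 n h b
    · intro π hπ _
      obtain ⟨n, hn⟩ := Set.mem_iUnion.1 hπ
      by_cases hf : ∀ m, γ (rp π m) < θ
      · obtain ⟨m, hm, hm'⟩ := hg2 n π ⟨hn, hf⟩ rfl
        refine ⟨m, hm, hm'.trans ?_⟩
        exact (ENNReal.le_tsum n).trans le_add_self
      · push Not at hf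
        obtain ⟨m, hm⟩ := hf
        refine ⟨m, Nat.zero_le _, le_trans ?_ le_self_add⟩
        rw [← ENNReal.inv_mul_cancel hθ0 hθt]
        gcongr
  calc θ * Gam κ (⋃ n, E n) [] ≤ θ * (θ⁻¹ * γ [] + ∑' n, g n []) := by gcongr
    _ = γ [] + θ * ∑' n, g n [] := by
        rw [mul_add, ← mul_assoc, ENNReal.mul_inv_cancel hθ0 hθt, one_mul]
    _ ≤ γ [] + 1 * η := by
        gcongr
        exact (ENNReal.tsum_le_tsum fun n => (hg3 n).le).trans hεs.le
    _ = _ := by rw [one_mul]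

theorem gam_le_max [Nonempty B] [Fintype B] (hκ : ∀ h b, ∑ q, κ h b q = 1) (E : Set (ℕ → Q))
    (h : List Q) : ∃ b, Gam κ E h ≤ ∑ q, κ h b q * Gam κ E (q :: h) := by
  obtain ⟨b, -, hb⟩ := Finset.exists_max_image Finset.univ
    (fun b => ∑ q, κ h b q * Gam κ E (q :: h)) Finset.univ_nonempty
  refine ⟨b, ?_⟩
  refine ENNReal.le_of_forall_pos_le_add fun η hη _ => ?_
  set S := ∑ q, κ h b q * Gam κ E (q :: h) with hS
  set g : List Q → ℝ≥0∞ := fun x => if x = h then S + η else if x.tail = h then Gam κ E x + η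
    else if h <:+ x then 0 else ⊤ with hg
  have e0 : g h = S + η := by simp [hg]
  have e1 : ∀ q, g (q :: h) = Gam κ E (q :: h) + η := by
    intro q
    simp [hg]
  rw [← e0]
  refine piece (g := g) ?_ (fun x => ∃ q, x = q :: h) ?_ ?_
  · intro x b'
    by_cases h1 : x = h
    · subst h1
      simp only [e0, e1, mul_add, Finset.sum_add_distrib]
      rw [← Finset.sum_mul, hκ, one_mul]
      gcongr
      exact hb b' (Finset.mem_univ _)
    · by_cases h2 : h <:+ x
      · have : ∀ q, g (q :: x) = 0 := by
          intro q
          have n1 : q :: x ≠ h := by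
            rintro rfl
            have := h2.length_le
            simp at this
          have n3 : h <:+ q :: x := h2.trans (List.suffix_cons _ _)
          simp [hg, n1, h1, n3]
        simp [this]
      · have n2 : x.tail ≠ h := fun e => h2 (e ▸ List.tail_suffix x)
        simp [hg, h1, h2, n2]
  · rintro x ⟨q, rfl⟩
    rw [e1]
    exact ENNReal.lt_add_right ((gam_le_one hκ _ _).trans_lt ENNReal.one_lt_top).ne
      (by exact_mod_cast hη.ne')
  · intro π _ hπ
    exact ⟨h.length + 1, Nat.le_succ _, π h.length, by rw [rp, hπ]⟩


end Cap

theorem rp_congr {Q : Type} {π π' : ℕ → Q} {n : ℕ} (h : ∀ i < n, π i = π' i) :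
    rp π n = rp π' n := by
  induction n with
  | zero => rfl
  | succ n ih => simp [rp, h n (Nat.lt_succ_self n), ih fun i hi => h i (hi.trans (Nat.lt_succ_self n))]

theorem rp_eq_iff {Q : Type} {π π' : ℕ → Q} {n : ℕ} :
    rp π n = rp π' n ↔ ∀ i < n, π i = π' i := by
  refine ⟨fun h => ?_, rp_congr⟩
  induction n with
  | zero => intro i hi; omega
  | succ n ih =>
    simp only [rp, List.cons.injEq] at h
    intro i hi
    rcases Nat.lt_succ_iff_lt_or_eq.1 hi with h' | h'
    · exact ih h.2 i h'
    · rw [h']; exact h.1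

theorem isOpen_finDep {α : Type} [TopologicalSpace α] [DiscreteTopology α] (n : ℕ)
    (p : (ℕ → α) → Prop) (hp : ∀ x y, (∀ j < n, x j = y j) → p x → p y) : IsOpen {x | p x} := by
  have : {x | p x} = ⋃ x ∈ {x | p x}, PiNat.cylinder x n := by
    ext y
    simp only [Set.mem_iUnion, Set.mem_ofPred_eq, exists_prop]
    constructor
    · intro hy; exact ⟨y, hy, PiNat.self_mem_cylinder y n⟩
    · rintro ⟨x, hx, hxy⟩
      exact hp x y (fun j hj => ((PiNat.mem_cylinder_iff.1 hxy) j hj).symm) hx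
  rw [this]
  exact isOpen_biUnion fun x _ => PiNat.isOpen_cylinder _ x n

theorem choquet {Q B : Type} [Fintype Q] {κ : List Q → B → Q → ℝ≥0∞}
    [TopologicalSpace Q] [DiscreteTopology Q]
    (hκ : ∀ h b, ∑ q, κ h b q = 1) {E : Set (ℕ → Q)} (hE : AnalyticSet E) {ε : ℝ≥0∞}
    (hε : ε < Gam κ E []) : ∃ C ⊆ E, IsCompact C ∧ ε ≤ Gam κ C [] := by
  rw [AnalyticSet] at hE
  rcases hE with rfl | ⟨f, hf, rfl⟩
  · rw [gam_eq_zero_of_empty (by simp)] at hε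
    exact absurd hε (by simp)
  have hstep : ∀ (i : ℕ) (X : {X : Set (ℕ → ℕ) // ε < Gam κ (f '' X) []}),
      ∃ k : ℕ, ε < Gam κ (f '' (X.1 ∩ {x | x i ≤ k})) [] := by
    rintro i ⟨X, hX⟩
    have e : f '' X = ⋃ k : ℕ, f '' (X ∩ {x | x i ≤ k}) := by
      rw [← Set.image_iUnion, ← Set.inter_iUnion]
      congr 1
      ext x
      simp only [Set.mem_inter_iff, Set.mem_iUnion, Set.mem_ofPred_eq]
      exact ⟨fun h => ⟨h, x i, le_rfl⟩, fun h => h.1⟩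
    rw [e] at hX
    have := hX.trans_le (gam_iUnion hκ (E := fun k : ℕ => f '' (X ∩ {x | x i ≤ k})) (by
      intro k k' hk
      refine Set.image_mono (Set.inter_subset_inter_right _ ?_)
      intro x hx
      exact le_trans hx hk))
    exact lt_iSup_iff.1 this
  choose k hk using hstep
  let X : ℕ → {X : Set (ℕ → ℕ) // ε < Gam κ (f '' X) []} := fun n =>
    Nat.rec ⟨Set.univ, by rw [Set.image_univ]; exact hε⟩
      (fun i Y => ⟨Y.1 ∩ {x | x i ≤ k i Y}, hk i Y⟩) n
  let m : ℕ → ℕ := fun i => k i (X i)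
  have hX : ∀ i x, x ∈ (X i).1 ↔ ∀ j < i, x j ≤ m j := by
    intro i
    induction i with
    | zero => intro x; simp [X]
    | succ i ih =>
      intro x
      have : (X (i + 1)).1 = (X i).1 ∩ {x | x i ≤ m i} := rfl
      rw [this, Set.mem_inter_iff, ih x]
      constructor
      · rintro ⟨h1, h2⟩ j hj
        rcases Nat.lt_succ_iff_lt_or_eq.1 hj with h' | h'
        · exact h1 j h'
        · rw [h']; exact h2
      · intro h
        exact ⟨fun j hj => h j (by omega), h i (by omega)⟩
  have hbox : IsCompact {x : ℕ → ℕ | ∀ j, x j ≤ m j} := by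
    have : {x : ℕ → ℕ | ∀ j, x j ≤ m j} = Set.pi Set.univ (fun j => Set.Iic (m j)) := by
      ext x; simp [Pi.le_def]
    rw [this]
    exact isCompact_univ_pi fun j => (Set.finite_Iic _).isCompact
  refine ⟨f '' {x | ∀ j, x j ≤ m j}, Set.image_subset_range _ _, hbox.image hf, ?_⟩
  refine le_iInf fun g => le_iInf fun h1 => le_iInf fun h2 => ?_
  set O : Set (ℕ → ℕ) := {x | ∃ n, 1 ≤ g (rp (f x) n)} with hO
  have hOo : IsOpen O := by
    have : O = ⋃ n, f ⁻¹' {π | 1 ≤ g (rp π n)} := by ext x; simp [hO]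
    rw [this]
    refine isOpen_iUnion fun n => IsOpen.preimage hf (isOpen_finDep n _ ?_)
    intro x y hxy hx
    rwa [← rp_congr hxy]
  let U : ℕ → Set (ℕ → ℕ) := fun i => {y | ∀ x : ℕ → ℕ, (∀ j < i, x j = y j) → x ∈ O}
  have hUm : Monotone U := by
    intro i i' hii y hy x hx
    exact hy x fun j hj => hx j (hj.trans_le hii)
  obtain ⟨i, hi⟩ := hbox.elim_directed_cover U
    (fun i => isOpen_finDep i _ (fun y z hyz hy x hx => hy x fun j hj => by
      rw [hx j hj, hyz j hj]))
    (by
      intro y hy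
      have hyO : y ∈ O := by
        obtain ⟨n, _, hn⟩ := h2 (f y) ⟨y, hy, rfl⟩ rfl
        exact ⟨n, hn⟩
      obtain ⟨V, ⟨⟨x, n, rfl⟩, hV⟩⟩ :=
        (PiNat.isTopologicalBasis_cylinders (fun _ : ℕ => ℕ)).mem_nhds_iff.1 (hOo.mem_nhds hyO)
      refine Set.mem_iUnion.2 ⟨n, fun z hz => hV.2 ?_⟩
      rw [PiNat.mem_cylinder_iff]
      intro j hj
      rw [hz j hj]
      exact PiNat.mem_cylinder_iff.1 hV.1 j hj)
    hUm.directed_le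
  refine le_trans (X i).2.le (gam_le h1 ?_)
  rintro _ ⟨x, hx, rfl⟩ _
  have := hi (show (fun j => min (x j) (m j)) ∈ _ from fun j => min_le_right _ _) x
    (fun j hj => (min_eq_left ((hX i x).1 hx j hj)).symm)
  obtain ⟨n, hn⟩ := this
  exact ⟨n, Nat.zero_le _, hn⟩

/-! ### Markov chain expectations -/

/-- The set of plays extending the reversed history `h`. -/
def cyl {Q : Type} (h : List Q) : Set (ℕ → Q) := {π | rp π h.length = h}

/-- Expectation of `φ` after `n` further steps. -/
noncomputable def Ex {Q : Type} [Fintype Q] (c : List Q → Q → ℝ≥0∞) :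
    ℕ → (List Q → ℝ≥0∞) → List Q → ℝ≥0∞
  | 0, φ, h => φ h
  | n + 1, φ, h => ∑ q, c h q * Ex c n φ (q :: h)

section Chain

variable {Q : Type} [Fintype Q] {c : List Q → Q → ℝ≥0∞}

theorem Ex_le_of_sup {φ : List Q → ℝ≥0∞} (hφ : ∀ h, ∑ q, c h q * φ (q :: h) ≤ φ h) (n : ℕ)
    (h : List Q) : Ex c n φ h ≤ φ h := by
  induction n generalizing h with
  | zero => exact le_rfl
  | succ n ih =>
    refine le_trans ?_ (hφ h)
    simp only [Ex]
    gcongr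
    exact ih _

theorem le_Ex_of_sub {φ : List Q → ℝ≥0∞} (hφ : ∀ h, φ h ≤ ∑ q, c h q * φ (q :: h)) (n : ℕ)
    (h : List Q) : φ h ≤ Ex c n φ h := by
  induction n generalizing h with
  | zero => exact le_rfl
  | succ n ih =>
    refine le_trans (hφ h) ?_
    simp only [Ex]
    gcongr
    exact ih _

theorem Ex_mono {φ ψ : List Q → ℝ≥0∞} (hφ : ∀ h, φ h ≤ ψ h) (n : ℕ)
    (h : List Q) : Ex c n φ h ≤ Ex c n ψ h := by
  induction n generalizing h with
  | zero => exact hφ h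
  | succ n ih =>
    simp only [Ex]
    gcongr
    exact ih _

theorem Ex_mul (x : ℝ≥0∞) (φ : List Q → ℝ≥0∞) (n : ℕ) (h : List Q) :
    Ex c n (fun h => x * φ h) h = x * Ex c n φ h := by
  induction n generalizing h with
  | zero => rfl
  | succ n ih =>
    simp only [Ex, ih, Finset.mul_sum]
    refine Finset.sum_congr rfl fun q _ => by ring

variable {m : MeasurableSpace (ℕ → Q)} {P : Measure (ℕ → Q)}

theorem measurableSet_rp (hm : ∀ h : List Q, MeasurableSet (cyl h)) (T : List Q → Prop) (n : ℕ) :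
    MeasurableSet {π : ℕ → Q | T (rp π n)} := by
  have : {π : ℕ → Q | T (rp π n)} = ⋃ h ∈ {h : List Q | T h ∧ h.length = n}, cyl h := by
    ext π
    simp only [Set.mem_ofPred_eq, Set.mem_iUnion, cyl, exists_prop]
    constructor
    · intro h; exact ⟨_, ⟨h, length_rp _ _⟩, by rw [length_rp]⟩
    · rintro ⟨h, ⟨h1, h2⟩, h3⟩
      rw [← h2, h3]; exact h1
  rw [this]
  exact MeasurableSet.biUnion (Set.to_countable _) fun h _ => hm h

theorem chain_measure (hm : ∀ h : List Q, MeasurableSet (cyl h))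
    (hc : ∀ h q, P (cyl (q :: h)) = P (cyl h) * c h q) (T : List Q → Prop) (n : ℕ) (h : List Q) :
    P (cyl h ∩ {π | T (rp π (h.length + n))}) =
      P (cyl h) * Ex c n (fun h => if T h then 1 else 0) h := by
  induction n generalizing h with
  | zero =>
    simp only [add_zero, Ex]
    by_cases hT : T h
    · have : cyl h ∩ {π | T (rp π h.length)} = cyl h := by
        ext π; simp only [cyl, Set.mem_inter_iff, Set.mem_ofPred_eq, and_iff_left_iff_imp]
        intro e; rw [e]; exact hT
      simp [this, hT]
    · have : cyl h ∩ {π | T (rp π h.length)} = ∅ := by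
        ext π; simp only [cyl, Set.mem_inter_iff, Set.mem_ofPred_eq, Set.mem_empty_iff_false,
          iff_false, not_and]
        intro e; rw [e]; exact hT
      simp [this, hT]
  | succ n ih =>
    have e : cyl h ∩ {π | T (rp π (h.length + (n + 1)))} =
        ⋃ q, (cyl (q :: h) ∩ {π | T (rp π ((q :: h).length + n))}) := by
      ext π
      simp only [cyl, Set.mem_inter_iff, Set.mem_ofPred_eq, Set.mem_iUnion, List.length_cons, rp,
        List.cons.injEq]
      have : ∀ k, k + 1 + n = k + (n + 1) := fun k => by ring
      simp only [this]
      constructor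
      · rintro ⟨h1, h2⟩; exact ⟨_, ⟨rfl, h1⟩, h2⟩
      · rintro ⟨q, ⟨_, h1⟩, h2⟩; exact ⟨h1, h2⟩
    rw [e, measure_iUnion]
    · rw [tsum_fintype]
      simp only [ih, hc, Ex, Finset.mul_sum, mul_assoc]
    · intro q q' hq
      rw [Function.onFun, Set.disjoint_left]
      rintro π ⟨h1, _⟩ ⟨h2, _⟩
      simp only [cyl, Set.mem_ofPred_eq, List.length_cons, rp, List.cons.injEq] at h1 h2
      exact hq (h1.1.symm.trans h2.1)
    · intro q
      exact (hm _).inter (measurableSet_rp hm T _)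

end Chain

/-- The capacity theorem. -/
theorem cap {Q B : Type} [Fintype Q] [Fintype B] [Nonempty B] {κ : List Q → B → Q → ℝ≥0∞}
    [TopologicalSpace Q] [DiscreteTopology Q]
    (hκ : ∀ h b, ∑ q, κ h b q = 1) {E : Set (ℕ → Q)} (hE : AnalyticSet E)
    {m : MeasurableSpace (ℕ → Q)} (hm : ∀ h : List Q, MeasurableSet (cyl h))
    (P : (List Q → B) → Measure (ℕ → Q)) (hP1 : ∀ t, P t Set.univ = 1)
    (hc : ∀ t h q, P t (cyl (q :: h)) = P t (cyl h) * κ h (t h) q)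
    {ε : ℝ≥0∞} (hPE : ∀ t, P t E ≤ ε) : Gam κ E [] ≤ ε := by
  by_contra hlt
  push Not at hlt
  obtain ⟨ε', h1, h2⟩ := exists_between hlt
  obtain ⟨C, hCE, hC, hCg⟩ := choquet hκ hE h2
  choose t ht using gam_le_max hκ C
  have key : ε' ≤ P t C := by
    set Tr : List Q → Prop := fun h => ∃ π ∈ C, rp π h.length = h with hTr
    have e : C = ⋂ n, {π : ℕ → Q | Tr (rp π n)} := by
      ext π
      simp only [Set.mem_iInter, Set.mem_ofPred_eq, hTr, length_rp]
      constructor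
      · intro hπ n; exact ⟨π, hπ, rfl⟩
      · intro hπ
        by_contra hn
        obtain ⟨V, ⟨⟨x, n, rfl⟩, hV⟩⟩ :=
          (PiNat.isTopologicalBasis_cylinders (fun _ : ℕ => Q)).mem_nhds_iff.1
            (hC.isClosed.isOpen_compl.mem_nhds hn)
        obtain ⟨π', h3, h4⟩ := hπ n
        refine hV.2 ?_ h3
        rw [PiNat.mem_cylinder_iff]
        intro j hj
        rw [rp_eq_iff.1 h4 j hj]
        exact PiNat.mem_cylinder_iff.1 hV.1 j hj
    rw [e, Antitone.measure_iInter]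
    · refine le_iInf fun n => ?_
      have h3 := chain_measure hm (hc t) Tr n []
      have h4 : cyl ([] : List Q) = Set.univ := by ext; simp [cyl, rp]
      simp only [h4, hP1, Set.univ_inter, one_mul, List.length_nil, zero_add] at h3
      rw [h3]
      refine hCg.trans ((le_Ex_of_sub ht n []).trans (Ex_mono (fun h => ?_) n []))
      by_cases hh : Tr h
      · simp only [hh, if_true]; exact gam_le_one hκ _ _
      · simp only [hh, if_false]
        rw [gam_eq_zero_of_empty]
        intro π hπ hn
        exact hh ⟨π, hπ, hn⟩
    · intro n k hnk π
      simp only [Set.mem_ofPred_eq, hTr, length_rp]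
      rintro ⟨π', h3, h4⟩
      exact ⟨π', h3, rp_congr fun i hi => rp_eq_iff.1 h4 i (hi.trans_le hnk)⟩
    · intro n; exact (measurableSet_rp hm Tr n).nullMeasurableSet
    · exact ⟨0, ((measure_mono (Set.subset_univ _)).trans_lt
        (by rw [hP1]; exact ENNReal.one_lt_top)).ne⟩
  exact absurd (key.trans ((measure_mono hCE).trans (hPE t))) (not_le.2 h1)

/-! ### Two-player supermartingales on color words -/

/-- `G` is a supermartingale for some action of Player A, whatever Player B does. -/
def ASup {A B Q K : Type} [Fintype Q] (p : Q → A → B → Q → ℝ≥0∞) (col : Q → Q → K)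
    (G : List K → Q → ℝ≥0∞) : Prop :=
  ∀ w q, ∃ a, ∀ b, ∑ q', p q a b q' * G (col q q' :: w) q' ≤ G w q

/-- `G` eventually detects every losing color sequence. -/
def ECov {Q K : Type} (W : Set (ℕ → K)) (G : List K → Q → ℝ≥0∞) : Prop :=
  ∀ ρ, ρ ∉ W → ∃ n0, ∀ n ≥ n0, ∀ q, 1 ≤ G (rp ρ n) q

/-- Reversed color history of a reversed state history. -/
def crev {Q K : Type} (col : Q → Q → K) : List Q → List K
  | [] => []
  | [_] => []
  | q :: p :: r => col p q :: crev col (p :: r)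

theorem crev_rp {Q K : Type} (col : Q → Q → K) (π : ℕ → Q) (n : ℕ) :
    crev col (rp π (n + 1)) = rp (colorSeq col π) n := by
  induction n with
  | zero => rfl
  | succ n ih =>
    rw [rp, rp, crev, ← rp, ih]
    rfl

theorem length_crev {Q K : Type} (col : Q → Q → K) (h : List Q) :
    (crev col h).length = h.length - 1 := by
  induction h with
  | nil => rfl
  | cons q h ih =>
    cases h with
    | nil => rfl
    | cons p r => simp [crev, ih]

theorem exists_rp {Q : Type} [Nonempty Q] (h : List Q) : ∃ π : ℕ → Q, rp π h.length = h := by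
  induction h with
  | nil => exact ⟨fun _ => Classical.arbitrary Q, rfl⟩
  | cons q h ih =>
    obtain ⟨π, hπ⟩ := ih
    refine ⟨Function.update π h.length q, ?_⟩
    simp only [List.length_cons, rp, Function.update_self, List.cons.injEq, true_and]
    conv_rhs => rw [← hπ]
    refine rp_congr fun i hi => ?_
    rw [Function.update_of_ne hi.ne]

theorem colorize {A B Q K : Type} [Fintype Q] [Nonempty Q] [Nonempty A]
    {p : Q → A → B → Q → ℝ≥0∞} {col : Q → Q → K}
    {κ : List Q → B → Q → ℝ≥0∞} (hκ : ∀ h b, ∑ q, κ h b q = 1) {σ : List Q → A}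
    (hk : ∀ q r b q', κ (q :: r) b q' = p q (σ (q :: r)) b q')
    {W : Set (ℕ → K)} {g : List Q → ℝ≥0∞} (hg : IsSup κ g) (hc : Cov g [] (UW col W)ᶜ)
    (hroot : g [] < 1) :
    ∃ G, ASup p col G ∧ ECov W G ∧ ∀ q, G [] q ≤ g [q] := by
  set H : List Q → Prop := fun h => 1 ≤ g h with hH
  set g' : List Q → ℝ≥0∞ := fun h => if stp H h = none then g h else 1 with hg'
  have hs : IsSup κ g' := by
    intro h b
    cases e : stp H h with
    | none =>
      have e1 : g' h = g h := by simp [hg', e]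
      rw [e1]
      refine le_trans ?_ (hg h b)
      gcongr with q
      simp only [hg', stp, e]
      by_cases hh : H (q :: h)
      · simp only [hh, if_true]; simpa using show 1 ≤ g (q :: h) from hh
      · simp [hh]
    | some x =>
      have e1 : g' h = 1 := by simp [hg', e]
      have e2 : ∀ q, g' (q :: h) = 1 := by intro q; simp [hg', e, stp]
      simp [e1, e2, hκ]
  set S : List K → Q → Set (List Q) := fun w q => {h | crev col h = w ∧ h.head? = some q} with hS
  have hSf : ∀ w q, (S w q).Finite := by
    intro w q
    refine (List.finite_length_le Q (w.length + 1)).subset ?_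
    rintro h ⟨h1, h2⟩
    have := length_crev col h
    rw [h1] at this
    show h.length ≤ _
    omega
  refine ⟨fun w q => ⨅ h ∈ S w q, g' h, ?_, ?_, ?_⟩
  · intro w q
    by_cases hne : (S w q).Nonempty
    · obtain ⟨h, hh, hmin⟩ := Set.exists_min_image _ g' (hSf w q) hne
      have e1 : ⨅ h ∈ S w q, g' h = g' h :=
        le_antisymm (iInf₂_le h hh) (le_iInf₂ hmin)
      refine ⟨σ h, fun b => ?_⟩
      dsimp only
      rw [e1]
      refine le_trans ?_ (hs h b)
      obtain ⟨h1, h2⟩ := hh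
      cases h with
      | nil => simp at h2
      | cons q1 r =>
        simp only [List.head?_cons, Option.some.injEq] at h2
        subst h2
        simp only [hk]
        gcongr with q'
        refine iInf₂_le (q' :: q1 :: r) ⟨?_, rfl⟩
        rw [crev, h1]
    · rw [Set.not_nonempty_iff_eq_empty] at hne
      refine ⟨Classical.arbitrary A, fun b => ?_⟩
      simp [hne]
  · intro ρ hρ
    let _ : TopologicalSpace Q := ⊥
    have : DiscreteTopology Q := ⟨rfl⟩
    by_contra hcon
    push Not at hcon
    let C : ℕ → Set (ℕ → Q) := fun n =>
      {π | rp (colorSeq col π) n = rp ρ n ∧ stp H (rp π (n + 1)) = none}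
    have hanti : ∀ n m, n ≤ m → C m ⊆ C n := by
      rintro n m hnm π ⟨h1, h2⟩
      refine ⟨rp_congr fun i hi => rp_eq_iff.1 h1 i (hi.trans_le hnm), ?_⟩
      cases e : stp H (rp π (n + 1)) with
      | none => rfl
      | some x => rw [stp_mono e (Nat.succ_le_succ hnm)] at h2; simp at h2
    have hne : ∀ n, (C n).Nonempty := by
      intro n
      obtain ⟨m, hm, q, hq⟩ := hcon n
      simp only [iInf_lt_iff] at hq
      obtain ⟨h, ⟨h1, h2⟩, h3⟩ := hq
      obtain ⟨π, hπ⟩ := exists_rp h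
      have hl := length_crev col h
      rw [h1, length_rp] at hl
      have hl' : h.length = m + 1 := by
        cases h with
        | nil => simp at h2
        | cons q r => simp at hl ⊢; omega
      rw [hl'] at hπ
      refine ⟨π, hanti n m hm ⟨?_, ?_⟩⟩
      · rw [← crev_rp, hπ, h1]
      · rw [hπ]
        by_contra hn
        simp [hg', hn] at h3
    have hcl : ∀ n, IsClosed (C n) := by
      intro n
      rw [← isOpen_compl_iff]
      refine isOpen_finDep (n + 1) (fun π => π ∉ C n) ?_
      intro x y hxy hx hy
      apply hx
      refine ⟨?_, ?_⟩
      · rw [← hy.1]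
        refine rp_congr fun i hi => ?_
        simp only [colorSeq]
        rw [hxy i (by omega), hxy (i + 1) (by omega)]
      · rw [rp_congr hxy]; exact hy.2
    obtain ⟨π, hπ⟩ := IsCompact.nonempty_iInter_of_sequence_nonempty_isCompact_isClosed C
      (fun n => hanti n (n + 1) (Nat.le_succ n)) hne (hcl 0).isCompact hcl
    rw [Set.mem_iInter] at hπ
    have hcs : colorSeq col π = ρ := by
      funext i
      exact rp_eq_iff.1 (hπ (i + 1)).1 i (Nat.lt_succ_self i)
    obtain ⟨n, -, hn⟩ := hc π (show colorSeq col π ∉ W by rw [hcs]; exact hρ) rfl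
    obtain ⟨x, hx⟩ := stp_some (H := H) hn
    have := stp_mono hx (Nat.le_succ n)
    rw [(hπ n).2] at this
    simp at this
  · intro q
    refine (iInf₂_le [q] ⟨rfl, rfl⟩).trans ?_
    by_cases hh : stp H [q] = none
    · simp [hg', hh]
    · simp only [hg', hh, if_false]
      have : H [q] ∨ H [] := by
        by_contra hn
        push Not at hn
        exact hh (by simp [stp, hn.1, hn.2])
      rcases this with h1 | h1
      · exact h1
      · exact absurd h1 (not_le.2 hroot)

theorem exists_pos_lb {ι : Type} [Fintype ι] (f : ι → ℝ≥0∞) (hf : ∀ i, 0 < f i) :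
    ∃ c, 0 < c ∧ c ≤ 1 ∧ ∀ i, c ≤ f i := by
  rcases isEmpty_or_nonempty ι with h | h
  · exact ⟨1, one_pos, le_rfl, fun i => h.elim i⟩
  · obtain ⟨i, -, hi⟩ := Finset.exists_min_image Finset.univ f Finset.univ_nonempty
    exact ⟨min (f i) 1, lt_min (hf i) one_pos, min_le_right _ _,
      fun j => (min_le_left _ _).trans (hi j (Finset.mem_univ _))⟩

theorem rp_prependWord {K : Type} (w : List K) (ρ : ℕ → K) (n : ℕ) :
    rp (prependWord w.reverse ρ) (w.length + n) = rp ρ n ++ w := by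
  induction n with
  | zero =>
    simp only [add_zero, rp, List.nil_append]
    have : ∀ v : List K, v <:+ w → rp (prependWord w.reverse ρ) v.length = v := by
      intro v
      induction v with
      | nil => intro _; rfl
      | cons k v ih =>
        intro hv
        rw [List.length_cons, rp, ih ((List.suffix_cons k v).trans hv)]
        obtain ⟨u, rfl⟩ := hv
        congr 1
        simp [prependWord]
    exact this w List.suffix_rfl
  | succ n ih =>
    rw [← add_assoc, rp, ih, rp, List.cons_append]
    congr 1
    simp [prependWord]

/-- Candidate (number of resets, current reversed segment) pairs for a reversed word. -/
noncomputable def cand {K : Type} (alive : List K → Prop) : List K → Finset (ℕ × List K)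
  | [] => {(0, [])}
  | k :: w => (cand alive w).image (fun x => (x.1 + 1, [])) ∪
      ((cand alive w).image (fun x => (x.1, k :: x.2))).filter (fun x => alive x.2)

theorem cand_nonempty {K : Type} (alive : List K → Prop) (w : List K) : (cand alive w).Nonempty := by
  induction w with
  | nil => simp [cand]
  | cons k w ih => simp [cand, ih]

theorem mem_cand_cons {K : Type} {alive : List K → Prop} {k : K} {w : List K} {x : ℕ × List K} :
    x ∈ cand alive (k :: w) ↔ (∃ y ∈ cand alive w, x = (y.1 + 1, [])) ∨
      (∃ y ∈ cand alive w, x = (y.1, k :: y.2) ∧ alive (k :: y.2)) := by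
  simp only [cand, Finset.mem_union, Finset.mem_image, Finset.mem_filter]
  constructor
  · rintro (⟨y, hy, rfl⟩ | ⟨⟨y, hy, rfl⟩, ha⟩)
    · exact Or.inl ⟨y, hy, rfl⟩
    · exact Or.inr ⟨y, hy, rfl, ha⟩
  · rintro (⟨y, hy, rfl⟩ | ⟨y, hy, rfl, ha⟩)
    · exact Or.inl ⟨y, hy, rfl⟩
    · exact Or.inr ⟨⟨y, hy, rfl⟩, ha⟩

theorem cand_rp {K : Type} {alive : List K → Prop} {ρ : ℕ → K} {n : ℕ} {x : ℕ × List K}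
    (hx : x ∈ cand alive (rp ρ n)) : ∃ τ j, τ + j = n ∧ x.2 = rp (fun i => ρ (τ + i)) j ∧
      (x.1, []) ∈ cand alive (rp ρ τ) ∧ (j ≠ 0 → alive x.2) := by
  induction n generalizing x with
  | zero =>
    refine ⟨0, 0, rfl, ?_⟩
    simp only [rp, cand, Finset.mem_singleton] at hx
    subst hx
    simp [rp, cand]
  | succ n ih =>
    have hx0 := hx
    rw [rp, mem_cand_cons] at hx
    rcases hx with ⟨y, hy, rfl⟩ | ⟨y, hy, rfl, ha⟩
    · exact ⟨n + 1, 0, rfl, rfl, hx0, fun h => absurd rfl h⟩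
    · obtain ⟨τ, j, h1, h2, h3, h4⟩ := ih hy
      refine ⟨τ, j + 1, by omega, ?_, h3, fun _ => ha⟩
      simp only [rp, ← h2, h1]

theorem cand_growth {K : Type} {alive : List K → Prop} {ρ : ℕ → K}
    (hd : ∀ τ, ∃ d, ∀ j ≥ d, ¬ alive (rp (fun i => ρ (τ + i)) j)) (M : ℕ) :
    ∃ n0, ∀ n ≥ n0, ∀ x ∈ cand alive (rp ρ n), M ≤ x.1 := by
  choose d hd using hd
  induction M with
  | zero => exact ⟨0, fun _ _ _ _ => Nat.zero_le _⟩
  | succ M ih =>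
    obtain ⟨n0, h0⟩ := ih
    refine ⟨n0 + 1 + ∑ τ ∈ Finset.range (n0 + 1), d τ, ?_⟩
    intro n hn x hx
    obtain ⟨τ, j, h1, h2, h3, h4⟩ := cand_rp hx
    have hτ : n0 < τ := by
      by_contra hle
      push Not at hle
      have h5 : d τ ≤ ∑ τ ∈ Finset.range (n0 + 1), d τ :=
        Finset.single_le_sum (f := d) (fun _ _ => Nat.zero_le _) (Finset.mem_range.2 (by omega))
      apply hd τ j (by omega)
      rw [← h2]
      exact h4 (by omega)
    obtain ⟨t, rfl⟩ : ∃ t, τ = t + 1 := ⟨τ - 1, by omega⟩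
    rw [rp, mem_cand_cons] at h3
    rcases h3 with ⟨y, hy, e⟩ | ⟨y, hy, e, _⟩
    · simp only [Prod.mk.injEq, and_true] at e
      have := h0 t (by omega) y hy
      omega
    · simp at e

section Main

set_option linter.unusedSectionVars false

variable {A B Q K : Type} [Fintype A] [Fintype B] [Fintype Q] [Nonempty A]
  {p : Q → A → B → Q → ℝ≥0∞} {col : Q → Q → K} {W : Set (ℕ → K)}

theorem tail_shift (htail : TailObj W) {ρ : ℕ → K} (hρ : ρ ∉ W) (τ : ℕ) :
    (fun i => ρ (τ + i)) ∉ W := by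
  intro h
  rw [htail _ (rp ρ τ).reverse] at h
  apply hρ
  convert h using 1
  funext i
  have h1 := rp_prependWord (rp ρ τ) (fun i => ρ (τ + i)) (i + 1)
  have h2 : ∀ j, rp (fun i => ρ (τ + i)) j ++ rp ρ τ = rp ρ (τ + j) := by
    intro j
    induction j with
    | zero => rfl
    | succ j ih => rw [rp, ← add_assoc, rp, List.cons_append, ih]
  rw [h2, length_rp] at h1
  exact (rp_eq_iff.1 h1 i (by omega)).symm

theorem ecov_shift (htail : TailObj W) {G : List K → Q → ℝ≥0∞} (hG : ECov W G) (w : List K) :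
    ECov W (fun u q => G (u ++ w) q) := by
  intro ρ hρ
  have : prependWord w.reverse ρ ∉ W := fun h => hρ ((htail _ _).2 h)
  obtain ⟨n0, h0⟩ := hG _ this
  refine ⟨n0, fun n hn q => ?_⟩
  show 1 ≤ G (rp ρ n ++ w) q
  rw [← rp_prependWord]
  exact h0 _ (by omega) q

theorem asup_shift {G : List K → Q → ℝ≥0∞} (hG : ASup p col G) (w : List K) :
    ASup p col (fun u q => G (u ++ w) q) := by
  intro u q
  obtain ⟨a, ha⟩ := hG (u ++ w) q
  exact ⟨a, fun b => by simpa using ha b⟩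

theorem asup_inf {ι : Type} [Fintype ι] [Nonempty ι] {H : ι → List K → Q → ℝ≥0∞}
    (hH : ∀ i, ASup p col (H i)) : ASup p col (fun w q => ⨅ i, H i w q) := by
  intro w q
  obtain ⟨i, hi⟩ := exists_eq_ciInf_of_finite (f := fun i => H i w q)
  obtain ⟨a, ha⟩ := hH i w q
  refine ⟨a, fun b => ?_⟩
  dsimp only
  rw [← hi]
  refine le_trans ?_ (ha b)
  gcongr
  exact iInf_le _ i

theorem ecov_inf {ι : Type} [Fintype ι] {H : ι → List K → Q → ℝ≥0∞}
    (hH : ∀ i, ECov W (H i)) : ECov W (fun w q => ⨅ i, H i w q) := by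
  intro ρ hρ
  choose n hn using fun i => hH i ρ hρ
  refine ⟨∑ i, n i, fun m hm q => le_iInf fun i => hn i m ?_ q⟩
  exact le_trans (Finset.single_le_sum (f := n) (fun _ _ => Nat.zero_le _) (Finset.mem_univ i)) hm

theorem main_strategy (hp : ∀ q a b, ∑ q', p q a b q' = 1) (htail : TailObj W) (q0 : Q)
    (h0 : ∀ ε : ℝ≥0∞, 0 < ε → ∃ G, ASup p col G ∧ ECov W G ∧ G [] q0 < ε) :
    ∃ (σ : List K → Q → A) (Y : List K → Q → ℝ≥0∞), Y [] q0 < ⊤ ∧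
      (∀ w q b, ∑ q', p q (σ w q) b q' * Y (col q q' :: w) q' ≤ Y w q) ∧
      (∀ ρ, ρ ∉ W → ∀ M : ℕ, ∃ n0, ∀ n ≥ n0, ∀ q, (M : ℝ≥0∞) ≤ Y (rp ρ n) q) := by
  haveI : Nonempty Q := ⟨q0⟩
  set Z : Q → Prop := fun q =>
    ∀ ε : ℝ≥0∞, 0 < ε → ∃ G, ASup p col G ∧ ECov W G ∧ G [] q < ε with hZ
  -- lower bound outside `Z`
  have hη : ∃ η, 0 < η ∧ η ≤ 1 ∧ ∀ q, ¬ Z q → ∀ G, ASup p col G → ECov W G → ∀ w, η ≤ G w q := by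
    have : ∀ q, ∃ e : ℝ≥0∞, 0 < e ∧ (¬ Z q → ∀ G, ASup p col G → ECov W G → e ≤ G [] q) := by
      intro q
      by_cases hq : Z q
      · exact ⟨1, one_pos, fun h => absurd hq h⟩
      · have hq' := hq
        simp only [hZ] at hq'
        push Not at hq'
        obtain ⟨e, he, h⟩ := hq'
        exact ⟨e, he, fun _ => h⟩
    choose e he1 he2 using this
    obtain ⟨η, h1, h2, h3⟩ := exists_pos_lb e he1
    refine ⟨η, h1, h2, fun q hq G hG hG' w => ?_⟩
    exact (h3 q).trans (by simpa using he2 q hq _ (asup_shift hG w) (ecov_shift htail hG' w))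
  obtain ⟨η, hη0, hη1, hη⟩ := hη
  obtain ⟨pm, hpm0, hpm1, hpm⟩ := exists_pos_lb
    (fun x : Q × A × B × Q => if p x.1 x.2.1 x.2.2.1 x.2.2.2 = 0 then 1
      else p x.1 x.2.1 x.2.2.1 x.2.2.2) (by
        intro x
        split_ifs with h
        · exact one_pos
        · exact pos_iff_ne_zero.2 h)
  set c := pm * η with hc
  have hc0 : c ≠ 0 := (ENNReal.mul_pos hpm0.ne' hη0.ne').ne'
  have hc1 : c ≤ 1 := by
    calc c ≤ 1 * 1 := by rw [hc]; gcongr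
      _ = 1 := one_mul 1
  have hct : c ≠ ⊤ := (hc1.trans_lt ENNReal.one_lt_top).ne
  set k := 2 / c with hk
  have hkc : k * c = 2 := ENNReal.div_mul_cancel hc0 hct
  have hkt : k ≠ ⊤ := by rw [hk]; exact ENNReal.div_ne_top (by simp) hc0
  have hk0 : k ≠ 0 := by
    intro h; rw [h, zero_mul] at hkc; exact absurd hkc (by simp)
  have hk2 : 2 ≤ k := by
    rw [← hkc]
    calc k * c ≤ k * 1 := by gcongr
      _ = k := mul_one k
  -- a uniformly good supermartingale
  have hH : ∀ i : Q, ∃ H, ASup p col H ∧ ECov W H ∧ (Z i → H [] i < k⁻¹) := by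
    intro i
    by_cases hi : Z i
    · obtain ⟨G, h1, h2, h3⟩ := hi k⁻¹ (ENNReal.inv_pos.2 hkt)
      exact ⟨G, h1, h2, fun _ => h3⟩
    · refine ⟨fun _ _ => 1, ?_, ?_, fun h => absurd h hi⟩
      · intro w q
        exact ⟨Classical.arbitrary A, fun b => by simp [hp]⟩
      · intro ρ _
        exact ⟨0, fun _ _ _ => le_rfl⟩
  choose H hH1 hH2 hH3 using hH
  set G : List K → Q → ℝ≥0∞ := fun w q => ⨅ i, H i w q with hG
  have hG1 : ASup p col G := asup_inf hH1
  have hG2 : ECov W G := ecov_inf hH2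
  have hG3 : ∀ q, Z q → k * G [] q < 1 := by
    intro q hq
    have h1 : G [] q < k⁻¹ := (iInf_le _ q).trans_lt (hH3 q hq)
    rw [← ENNReal.mul_inv_cancel hk0 hkt]
    exact (ENNReal.mul_lt_mul_iff_right hk0 hkt).2 h1
  choose α hα using hG1
  have hsafe : ∀ u q, G u q < c → ∀ b q', p q (α u q) b q' ≠ 0 → Z q' := by
    intro u q hlt b q' hne
    by_contra hq'
    refine absurd hlt (not_lt.2 ?_)
    calc c ≤ p q (α u q) b q' * G (col q q' :: u) q' := by
          rw [hc]
          gcongr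
          · have := hpm (q, α u q, b, q')
            simpa [hne] using this
          · exact hη q' hq' G (asup_inf hH1) hG2 _
      _ ≤ ∑ q', p q (α u q) b q' * G (col q q' :: u) q' :=
          Finset.single_le_sum (f := fun q' => p q (α u q) b q' * G (col q q' :: u) q')
            (fun _ _ => zero_le) (Finset.mem_univ q')
      _ ≤ G u q := hα u q b
  set alive : List K → Prop := fun u => ∃ q, G u q < 1 with halive
  set vl : Q → ℕ × List K → ℝ≥0∞ := fun q x => x.1 + k * G x.2 q with hvl
  have hmin : ∀ w q, ∃ x ∈ cand alive w, ∀ y ∈ cand alive w, vl q x ≤ vl q y := fun w q =>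
    Finset.exists_min_image _ _ (cand_nonempty alive w)
  choose mx hmx1 hmx2 using hmin
  -- the minimiser has a small value
  have hsmall : ∀ w q, Z q → G (mx w q).2 q < c := by
    intro w q hq
    have hr : (mx w q).2 = [] ∨ ((mx w q).1 + 1, []) ∈ cand alive w := by
      have h1 := hmx1 w q
      cases w with
      | nil => left; simp only [cand, Finset.mem_singleton] at h1; rw [h1]
      | cons l w =>
        rw [mem_cand_cons] at h1
        rcases h1 with ⟨y, hy, e⟩ | ⟨y, hy, e, _⟩
        · left; rw [e]
        · right
          rw [mem_cand_cons]
          left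
          exact ⟨y, hy, by rw [e]⟩
    have hlt : k * G (mx w q).2 q < k * c := by
      rw [hkc]
      rcases hr with h1 | h1
      · rw [h1]
        exact (hG3 q hq).trans (by norm_num)
      · have h2 := hmx2 w q _ h1
        simp only [hvl, Nat.cast_add, Nat.cast_one, add_assoc] at h2
        have h3 := (ENNReal.add_le_add_iff_left (ENNReal.natCast_ne_top _)).1 h2
        refine h3.trans_lt ?_
        calc 1 + k * G [] q < 1 + 1 := (ENNReal.add_lt_add_iff_left (by simp)).2 (hG3 q hq)
          _ = 2 := by norm_num
    exact (ENNReal.mul_lt_mul_iff_right hk0 hkt).1 hlt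
  refine ⟨fun w q => α (mx w q).2 q, fun w q => if Z q then vl q (mx w q) else ⊤, ?_, ?_, ?_⟩
  · have hz : Z q0 := h0
    simp only [hz, if_true]
    refine lt_of_le_of_lt (hmx2 [] q0 (0, []) (by simp [cand])) ?_
    simp only [hvl, Nat.cast_zero, zero_add]
    exact (hG3 q0 hz).trans ENNReal.one_lt_top
  · intro w q b
    dsimp only
    by_cases hq : Z q
    · simp only [hq, if_true]
      set x := mx w q with hx
      have hstep : ∀ q', p q (α x.2 q) b q' *
          (if Z q' then vl q' (mx (col q q' :: w) q') else ⊤) ≤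
          p q (α x.2 q) b q' * (x.1 + k * G (col q q' :: x.2) q') := by
        intro q'
        by_cases hne : p q (α x.2 q) b q' = 0
        · simp [hne]
        have hz' := hsafe x.2 q (hsmall w q hq) b q' hne
        simp only [hz', if_true]
        gcongr
        by_cases ha : alive (col q q' :: x.2)
        · exact hmx2 _ q' (x.1, col q q' :: x.2) (mem_cand_cons.2 (Or.inr ⟨x, hmx1 w q, rfl, ha⟩))
        · refine (hmx2 _ q' (x.1 + 1, []) (mem_cand_cons.2 (Or.inl ⟨x, hmx1 w q, rfl⟩))).trans ?_
          simp only [halive] at ha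
          push Not at ha
          simp only [hvl, Nat.cast_add, Nat.cast_one, add_assoc]
          gcongr
          calc 1 + k * G [] q' ≤ 1 + 1 := by gcongr; exact (hG3 q' hz').le
            _ = 2 := by norm_num
            _ ≤ k * 1 := by rw [mul_one]; exact hk2
            _ ≤ k * G (col q q' :: x.2) q' := by gcongr; exact ha q'
      refine (Finset.sum_le_sum fun q' _ => hstep q').trans ?_
      calc ∑ q', p q (α x.2 q) b q' * (x.1 + k * G (col q q' :: x.2) q')
          = x.1 + k * ∑ q', p q (α x.2 q) b q' * G (col q q' :: x.2) q' := by
            simp only [mul_add, Finset.sum_add_distrib]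
            rw [← Finset.sum_mul, hp, one_mul, Finset.mul_sum]
            congr 1
            refine Finset.sum_congr rfl fun q' _ => by ring
        _ ≤ x.1 + k * G x.2 q := by gcongr; exact hα x.2 q b
    · simp [hq]
  · intro ρ hρ M
    obtain ⟨n0, hn0⟩ := cand_growth (alive := alive) (ρ := ρ) (by
      intro τ
      obtain ⟨d, hd⟩ := hG2 _ (tail_shift htail hρ τ)
      refine ⟨d, fun j hj => ?_⟩
      rintro ⟨q, hq⟩
      exact absurd hq (not_lt.2 (hd j hj q))) M
    refine ⟨n0, fun n hn q => ?_⟩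
    dsimp only
    split_ifs
    · refine le_trans ?_ (le_self_add (a := ((mx (rp ρ n) q).1 : ℝ≥0∞)))
      exact_mod_cast hn0 n hn _ (hmx1 _ q)
    · exact le_top

end Main

/-! ### Cylinders and measurability -/

theorem reverse_rp {Q : Type} (π : ℕ → Q) (n : ℕ) :
    (rp π n).reverse = List.ofFn (fun i : Fin n => π i) := by
  induction n with
  | zero => simp [rp]
  | succ n ih =>
    rw [List.ofFn_succ', List.concat_eq_append, rp, List.reverse_cons, ih]
    simp

theorem Cyl_eq_cyl {Q : Type} (w : List Q) : Cyl w = cyl w.reverse := by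
  ext π
  have e : rp π w.length = w.reverse ↔ List.ofFn (fun i : Fin w.length => π i) = w := by
    rw [← reverse_rp]
    constructor
    · intro h; rw [h, List.reverse_reverse]
    · intro h; rw [← List.reverse_reverse (rp π w.length), h]
  have e1 : π ∈ cyl w.reverse ↔ rp π w.length = w.reverse := by
    simp [cyl]
  rw [e1, e]
  constructor
  · intro h
    refine List.ext_getElem (by simp) fun i h1 h2 => ?_
    simpa using h i h2
  · intro h i hi
    have := List.getElem_ofFn (f := fun i : Fin w.length => π i) (i := i) (by simpa using hi)
    rw [List.get_eq_getElem]
    simp only at this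
    rw [← this]
    exact List.getElem_of_eq h _

theorem measurableSet_cyl {Q : Type} (h : List Q) : MeasurableSet[BorelSeq Q] (cyl h) := by
  have : cyl h = Cyl h.reverse := by rw [Cyl_eq_cyl, List.reverse_reverse]
  exact MeasurableSpace.measurableSet_generateFrom ⟨h.reverse, this⟩

theorem measurableSet_UW {Q K : Type} [Fintype Q] (col : Q → Q → K) {W : Set (ℕ → K)}
    (hW : MeasurableSet[BorelSeq K] W) : MeasurableSet[BorelSeq Q] (UW col W) := by
  have : @Measurable _ _ (BorelSeq Q) (BorelSeq K) (colorSeq col) := by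
    refine @measurable_generateFrom _ _ (BorelSeq Q) _ _ ?_
    rintro _ ⟨w, rfl⟩
    have e : colorSeq col ⁻¹' Cyl w = {π : ℕ → Q | crev col (rp π (w.length + 1)) = w.reverse} := by
      ext π
      rw [Set.mem_preimage, Cyl_eq_cyl, Set.mem_ofPred_eq, crev_rp]
      simp [cyl]
    rw [e]
    exact @measurableSet_rp _ _ (BorelSeq Q) measurableSet_cyl
      (fun h => crev col h = w.reverse) (w.length + 1)
  exact this hW

theorem analyticSet_of_borelSeq {Q : Type} [Fintype Q] [TopologicalSpace Q] [DiscreteTopology Q]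
    {E : Set (ℕ → Q)} (hE : MeasurableSet[BorelSeq Q] E) : AnalyticSet E := by
  let _ : MeasurableSpace (ℕ → Q) := borel _
  have : BorelSpace (ℕ → Q) := ⟨rfl⟩
  have : PolishSpace Q := inferInstance
  have hle : BorelSeq Q ≤ borel (ℕ → Q) := by
    refine MeasurableSpace.generateFrom_le ?_
    rintro _ ⟨w, rfl⟩
    rw [Cyl_eq_cyl]
    refine IsOpen.measurableSet (isOpen_finDep w.reverse.length _ ?_)
    intro x y hxy hx
    rwa [← rp_congr hxy]
  exact (hle _ hE).analyticSet

/-! ### The chain rule for the measure of a play -/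

/-- The kernel on reversed histories induced by a step weight. -/
noncomputable def ck {Q : Type} (q0 : Q) (f : List Q → Q → Q → ℝ≥0∞) : List Q → Q → ℝ≥0∞
  | [], q => if q = q0 then 1 else 0
  | q :: r, q' => f r.reverse q q'

theorem histOf_eq {Q : Type} (x : ℕ → Q) (k : ℕ) (i : Fin k) :
    histOf (fun j : Fin (k + 1) => x j) i = (rp x i).reverse := by
  rw [reverse_rp]; rfl

theorem chain_rule {Q : Type} [Nonempty Q] (q0 : Q) (f : List Q → Q → Q → ℝ≥0∞)
    (P : @Measure (ℕ → Q) (BorelSeq Q)) (h1 : P Set.univ = 1)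
    (hP : ∀ (k : ℕ) (π : Fin (k + 1) → Q), P (Cyl (List.ofFn π)) =
        if π 0 = q0 then ∏ i : Fin k, f (histOf π i) (π i.castSucc) (π i.succ) else 0)
    (h : List Q) (q : Q) : P (cyl (q :: h)) = P (cyl h) * ck q0 f h q := by
  have key : ∀ (x : ℕ → Q) (k : ℕ), P (cyl (rp x (k + 1))) =
      if x 0 = q0 then ∏ i ∈ Finset.range k, f (rp x i).reverse (x i) (x (i + 1)) else 0 := by
    intro x k
    have := hP k (fun j : Fin (k + 1) => x j)
    rw [← reverse_rp, Cyl_eq_cyl, List.reverse_reverse] at this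
    rw [this, ← Fin.prod_univ_eq_prod_range
      (fun i => f (rp x i).reverse (x i) (x (i + 1))) k]
    simp only [histOf_eq]
    rfl
  obtain ⟨x, hx⟩ := exists_rp (q :: h)
  rw [List.length_cons] at hx
  have hx' := hx
  rw [rp, List.cons.injEq] at hx
  cases h with
  | nil =>
    rw [← hx', List.length_nil, key]
    have : cyl ([] : List Q) = Set.univ := by ext; simp [cyl, rp]
    rw [this, h1]
    have := hx.1
    simp only [List.length_nil] at this
    simp [ck, this]
  | cons p r =>
    rw [← hx', ← hx.2]
    simp only [List.length_cons] at hx ⊢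
    rw [key, key, length_rp, Finset.prod_range_succ]
    have h2 := hx.2
    rw [rp, List.cons.injEq] at h2
    simp only [ck, rp, h2.1, h2.2, hx.1]
    split_ifs <;> simp

theorem colHist_append {Q K : Type} (col : Q → Q → K) (l : List Q) (p q : Q) :
    colHist col (l ++ [p]) q = colHist col l p ++ [col p q] := by
  induction l with
  | nil => rfl
  | cons a l ih =>
    cases l with
    | nil => rfl
    | cons b l => simpa [colHist] using ih

theorem crev_reverse {Q K : Type} (col : Q → Q → K) (q : Q) (r : List Q) :
    colHist col r.reverse q = (crev col (q :: r)).reverse := by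
  induction r generalizing q with
  | nil => rfl
  | cons p r ih => rw [List.reverse_cons, colHist_append, ih, crev, List.reverse_cons]

/-! ### Almost-sure strategies -/

theorem pmf_sum {α : Type} [Fintype α] (μ : PMF α) : ∑ a, μ a = 1 := by
  rw [← tsum_fintype (L := .unconditional _)]; exact μ.tsum_coe

section OneSide

variable {A B Q D K : Type} [Fintype A] [Fintype B] [Fintype Q]
  [Nonempty A] [Nonempty B] [Nonempty Q]

theorem oneSide (q0 : Q) (δ : Q → A → B → D) (dist : D → PMF Q) (col : Q → Q → K)
    (W : Set (ℕ → K)) (hW : MeasurableSet[BorelSeq K] W) (htail : TailObj W)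
    (P : (List Q → Q → PMF A) → (List Q → Q → PMF B) →
      @Measure (ℕ → Q) (BorelSeq Q))
    (hprob : ∀ tA tB, P tA tB Set.univ = 1)
    (hP : ∀ (tA : List Q → Q → PMF A) (tB : List Q → Q → PMF B)
        (k : ℕ) (π : Fin (k + 1) → Q),
      P tA tB (Cyl (List.ofFn π)) =
        if π 0 = q0 then
          ∏ i : Fin k, ∑ a : A, ∑ b : B,
            tA (histOf π i) (π i.castSucc) a * tB (histOf π i) (π i.castSucc) b *
              dist (δ (π i.castSucc) a b) (π i.succ)
        else 0)
    (h0 : ∀ ε : ℝ≥0∞, 0 < ε → ∃ sA : List K → Q → A, ∀ tB,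
      P (toStratA col sA) tB (UW col W)ᶜ ≤ ε) :
    ∃ sA : List K → Q → A, ∀ tB, P (toStratA col sA) tB (UW col W)ᶜ = 0 := by
  -- the chain rule
  have hstep : ∀ (sA : List K → Q → A) (tB : List Q → Q → PMF B) (h : List Q) (q : Q) (q' : Q),
      ∑ a : A, ∑ b : B, toStratA col sA h q a * tB h q b * dist (δ q a b) q' =
        ∑ b, tB h q b * dist (δ q (sA (colHist col h q) q) b) q' := by
    intro sA tB h q q'
    rw [Finset.sum_eq_single (sA (colHist col h q) q)]
    · simp [toStratA]
    · intro a _ ha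
      simp [toStratA, ha]
    · simp
  have hchain : ∀ (sA : List K → Q → A) (tB : List Q → Q → PMF B) (h : List Q) (q : Q),
      P (toStratA col sA) tB (cyl (q :: h)) = P (toStratA col sA) tB (cyl h) *
        ck q0 (fun r q q' => ∑ b, tB r q b * dist (δ q (sA (colHist col r q) q) b) q') h q := by
    intro sA tB h q
    refine chain_rule q0 _ _ (hprob _ _) ?_ h q
    intro k π
    rw [hP]
    simp only [hstep]
  let p : Q → A → B → Q → ℝ≥0∞ := fun q a b q' => dist (δ q a b) q'
  have hp : ∀ q a b, ∑ q', p q a b q' = 1 := fun q a b => pmf_sum _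
  have hE := measurableSet_UW col hW
  have hEc : MeasurableSet[BorelSeq Q] (UW col W)ᶜ := hE.compl
  -- supermartingales on color words
  have hG : ∀ ε : ℝ≥0∞, 0 < ε → ∃ G, ASup p col G ∧ ECov W G ∧ G [] q0 < ε := by
    intro ε hε
    obtain ⟨ε', h1, h2⟩ := exists_between (lt_min hε one_pos)
    obtain ⟨sA, hsA⟩ := h0 ε' h1
    let σ : List Q → A := fun h => match h with
      | [] => Classical.arbitrary A
      | q :: r => sA (colHist col r.reverse q) q
    let κ : List Q → B → Q → ℝ≥0∞ := fun h b => match h with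
      | [] => fun q => if q = q0 then 1 else 0
      | q :: r => fun q' => p q (σ (q :: r)) b q'
    have hκ : ∀ h b, ∑ q, κ h b q = 1 := by
      intro h b
      cases h with
      | nil => simp [κ]
      | cons q r => exact hp _ _ _
    let _ : TopologicalSpace Q := ⊥
    have : DiscreteTopology Q := ⟨rfl⟩
    have hcap : Gam κ (UW col W)ᶜ [] ≤ ε' := by
      refine cap hκ (analyticSet_of_borelSeq hEc) (m := BorelSeq Q) measurableSet_cyl
        (fun t => P (toStratA col sA) (fun past q => PMF.pure (t (q :: past.reverse))))
        (fun t => hprob _ _) ?_ (fun t => hsA _)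
      intro t h q
      rw [hchain]
      congr 1
      cases h with
      | nil => rfl
      | cons q' r =>
        simp only [ck, List.reverse_reverse]
        rw [Finset.sum_eq_single (t (q' :: r))]
        · simp [κ, σ, p]
        · intro b _ hb; simp [hb]
        · simp
    obtain ⟨g, hg1, hg2, hg3⟩ := exists_of_gam_lt (hcap.trans_lt h2)
    obtain ⟨G, hG1, hG2, hG3⟩ := colorize (p := p) (col := col) (W := W) hκ (σ := σ)
      (fun q r b q' => rfl) hg1 hg2 (hg3.trans_le (min_le_right _ _))
    refine ⟨G, hG1, hG2, (hG3 q0).trans_lt (lt_of_le_of_lt ?_ (hg3.trans_le (min_le_left _ _)))⟩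
    have := hg1 [] (Classical.arbitrary B)
    simpa [κ] using this
  obtain ⟨σ, Y, hY0, hYs, hYc⟩ := main_strategy hp htail q0 hG
  refine ⟨fun c q => σ c.reverse q, fun tB => ?_⟩
  set μ := P (toStratA col fun c q => σ c.reverse q) tB with hμ
  set c := ck q0 (fun r q q' => ∑ b, tB r q b *
    dist (δ q (σ (colHist col r q).reverse q) b) q') with hc
  have hμc : ∀ h q, μ (cyl (q :: h)) = μ (cyl h) * c h q := hchain _ tB
  let y : List Q → ℝ≥0∞ := fun h => match h with
    | [] => Y [] q0
    | q :: r => Y (crev col (q :: r)) q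
  have hy : ∀ h, ∑ q, c h q * y (q :: h) ≤ y h := by
    intro h
    cases h with
    | nil => simp [hc, ck, y, crev]
    | cons q r =>
      simp only [hc, ck, y, crev_reverse, List.reverse_reverse, Finset.sum_mul]
      rw [Finset.sum_comm]
      calc _ = ∑ b, tB r.reverse q b * ∑ q', p q (σ (crev col (q :: r)) q) b q' *
            Y (col q q' :: crev col (q :: r)) q' := by
            refine Finset.sum_congr rfl fun b _ => ?_
            rw [Finset.mul_sum]
            refine Finset.sum_congr rfl fun q' _ => ?_
            simp only [p, crev]
            ring
        _ ≤ ∑ b, tB r.reverse q b * Y (crev col (q :: r)) q := by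
            gcongr
            exact hYs _ _ _
        _ = _ := by rw [← Finset.sum_mul, pmf_sum, one_mul]
  have hbound : ∀ M : ℕ, (M : ℝ≥0∞) * μ (UW col W)ᶜ ≤ Y [] q0 := by
    intro M
    let T : List Q → Prop := fun h => (M : ℝ≥0∞) ≤ y h
    have hT : ∀ n, (M : ℝ≥0∞) * μ {π | T (rp π n)} ≤ Y [] q0 := by
      intro n
      have h3 := chain_measure (m := BorelSeq Q) measurableSet_cyl hμc T n []
      have h4 : cyl ([] : List Q) = Set.univ := by ext; simp [cyl, rp]
      have h5 : μ Set.univ = 1 := hprob _ _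
      simp only [h4, h5, Set.univ_inter, one_mul, List.length_nil, zero_add] at h3
      rw [h3, ← Ex_mul]
      refine (Ex_mono (fun h => ?_) n []).trans (Ex_le_of_sup hy n [])
      by_cases hh : T h
      · rw [if_pos hh, mul_one]; exact hh
      · simp [hh]
    have hsub : (UW col W)ᶜ ⊆ ⋃ n0 : ℕ, ⋂ n ≥ n0, {π : ℕ → Q | T (rp π (n + 1))} := by
      intro π hπ
      obtain ⟨n0, hn⟩ := hYc (colorSeq col π) hπ M
      simp only [Set.mem_iUnion, Set.mem_iInter, Set.mem_ofPred_eq]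
      refine ⟨n0, fun n hn' => ?_⟩
      have := hn n hn' (π n)
      rw [← crev_rp] at this
      exact this
    calc (M : ℝ≥0∞) * μ (UW col W)ᶜ
        ≤ M * μ (⋃ n0 : ℕ, ⋂ n ≥ n0, {π : ℕ → Q | T (rp π (n + 1))}) := by
          gcongr
      _ = M * ⨆ n0 : ℕ, μ (⋂ n ≥ n0, {π : ℕ → Q | T (rp π (n + 1))}) := by
          rw [Monotone.measure_iUnion]
          intro a b hab
          exact Set.iInter₂_mono' fun n hn => ⟨n, hab.trans hn, le_rfl⟩
      _ = ⨆ n0 : ℕ, M * μ (⋂ n ≥ n0, {π : ℕ → Q | T (rp π (n + 1))}) := ENNReal.mul_iSup _ _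
      _ ≤ Y [] q0 := by
          refine iSup_le fun n0 => le_trans ?_ (hT (n0 + 1))
          gcongr
          exact Set.iInter₂_subset n0 le_rfl
  by_contra hne
  have h6 : Y [] q0 / μ (UW col W)ᶜ < ⊤ := ENNReal.div_lt_top hY0.ne hne
  obtain ⟨M, hM⟩ := ENNReal.exists_nat_gt h6.ne
  have := (ENNReal.div_lt_iff (Or.inl hne) (Or.inr hY0.ne)).1 hM
  exact absurd (hbound M) (not_le.2 this)

end OneSide

/-- Determinacy of finite locally determined stochastic concurrent games with a
Borel tail objective and extreme value: if `val_A = 1` or `val_B = 0`, then the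
game is determined (the values coincide and are attained by color strategies).
Here `P tA tB` is the probability measure on plays induced by the state strategies
`tA, tB`, axiomatized by its (characterizing) values on cylinder sets. -/
theorem stmt19 {A B Q D K : Type}
    [Fintype A] [Fintype B] [Fintype Q] [Fintype D]
    [Nonempty A] [Nonempty B] [Nonempty Q] [Nonempty D] [Nonempty K]
    (q0 : Q) (δ : Q → A → B → D) (dist : D → PMF Q) (col : Q → Q → K)
    (W : Set (ℕ → K)) (hW : MeasurableSet[BorelSeq K] W) (htail : TailObj W)
    (hloc : ∀ q : Q, GFDetermined (δ q))
    (P : (List Q → Q → PMF A) → (List Q → Q → PMF B) →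
      @Measure (ℕ → Q) (BorelSeq Q))
    (hprob : ∀ tA tB, P tA tB Set.univ = 1)
    (hP : ∀ (tA : List Q → Q → PMF A) (tB : List Q → Q → PMF B)
        (k : ℕ) (π : Fin (k + 1) → Q),
      P tA tB (Cyl (List.ofFn π)) =
        if π 0 = q0 then
          ∏ i : Fin k, ∑ a : A, ∑ b : B,
            tA (histOf π i) (π i.castSucc) a * tB (histOf π i) (π i.castSucc) b *
              dist (δ (π i.castSucc) a b) (π i.succ)
        else 0)
    (hval : valA col P (UW col W) = 1 ∨ valB col P (UW col W) = 0) :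
    valA col P (UW col W) = valB col P (UW col W) ∧
    (∃ sA : List K → Q → A,
      valSA col P (UW col W) sA = valA col P (UW col W)) ∧
    (∃ sB : List K → Q → B,
      valSB col P (UW col W) sB = valB col P (UW col W)) := by
  have hE := measurableSet_UW col hW
  have hle : valA col P (UW col W) ≤ valB col P (UW col W) :=
    iSup_le fun sA => le_iInf fun sB =>
      (iInf_le _ (toStratB col sB)).trans
        (le_iSup (fun tA => P tA (toStratB col sB) (UW col W)) (toStratA col sA))
  rcases hval with hv | hv
  · have hne : ∀ tA tB, P tA tB (UW col W) ≠ ⊤ := fun tA tB =>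
      ((measure_mono (Set.subset_univ _)).trans_lt
        (by rw [hprob]; exact ENNReal.one_lt_top)).ne
    have hcompl : ∀ tA tB, P tA tB (UW col W)ᶜ = 1 - P tA tB (UW col W) := fun tA tB => by
      rw [measure_compl hE (hne tA tB), hprob]
    obtain ⟨sA, hsA⟩ := oneSide q0 δ dist col W hW htail P hprob hP (by
      intro ε hε
      have h1 : 1 - ε < valA col P (UW col W) := by
        rw [hv]; exact ENNReal.sub_lt_self (by simp) (by simp) hε.ne'
      obtain ⟨sA, hs⟩ := lt_iSup_iff.1 h1
      refine ⟨sA, fun tB => ?_⟩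
      rw [hcompl, tsub_le_iff_left]
      have := hs.le.trans (iInf_le _ tB)
      rw [tsub_le_iff_left] at this
      rwa [add_comm])
    have hsA1 : valSA col P (UW col W) sA = 1 := by
      have : ∀ tB, P (toStratA col sA) tB (UW col W) = 1 := by
        intro tB
        have h1 := hsA tB
        rw [hcompl, tsub_eq_zero_iff_le] at h1
        refine le_antisymm ?_ h1
        rw [← hprob (toStratA col sA) tB]
        exact measure_mono (Set.subset_univ _)
      have hnB : Nonempty (List Q → Q → PMF B) :=
        ⟨fun _ _ => PMF.pure (Classical.arbitrary B)⟩
      simp only [valSA, this, iInf_const]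
    have hle1 : ∀ sB : List K → Q → B, valSB col P (UW col W) sB ≤ 1 := fun sB =>
      iSup_le fun tA => by
        rw [← hprob tA (toStratB col sB)]
        exact measure_mono (Set.subset_univ _)
    let sB : List K → Q → B := fun _ _ => Classical.arbitrary B
    have hB : valB col P (UW col W) = 1 :=
      le_antisymm ((iInf_le _ sB).trans (hle1 sB)) (hv ▸ hle)
    refine ⟨hv.trans hB.symm, ⟨sA, hsA1.trans hv.symm⟩, ⟨sB, ?_⟩⟩
    refine le_antisymm ((hle1 sB).trans hB.ge) (iInf_le _ sB)
  · have hcc : (UW col Wᶜ)ᶜ = UW col W := by ext; simp [UW]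
    obtain ⟨sB, hsB⟩ := oneSide q0 (fun q b a => δ q a b) dist col Wᶜ
      (by exact hW.compl) (fun ρ w => not_congr (htail ρ w))
      (fun tB tA => P tA tB) (fun tB tA => hprob tA tB) (by
        intro tB tA k π
        rw [hP]
        congr 1
        refine Finset.prod_congr rfl fun i _ => ?_
        rw [Finset.sum_comm]
        refine Finset.sum_congr rfl fun b _ => Finset.sum_congr rfl fun a _ => ?_
        ring) (by
        intro ε hε
        rw [hcc]
        have h1 : valB col P (UW col W) < ε := by rw [hv]; exact hε
        obtain ⟨sB, hs⟩ := iInf_lt_iff.1 h1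
        exact ⟨sB, fun tA =>
          (le_iSup (fun tA => P tA (toStratB col sB) (UW col W)) tA).trans hs.le⟩)
    rw [hcc] at hsB
    have hsB0 : valSB col P (UW col W) sB = 0 := by
      refine le_antisymm (iSup_le fun tA => ?_) bot_le
      exact (hsB tA).le
    have hA : valA col P (UW col W) = 0 := le_antisymm (hv ▸ hle) bot_le
    let sA : List K → Q → A := fun _ _ => Classical.arbitrary A
    refine ⟨hA.trans hv.symm, ⟨sA, ?_⟩, ⟨sB, hsB0.trans hv.symm⟩⟩
    refine le_antisymm (le_iSup (fun sA => valSA col P (UW col W) sA) sA) ?_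
    rw [hA]; exact bot_le
end
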